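/- arXiv:1403.6385 — 2 statements merged into one kernel-verified Lean document; each statement's English description precedes it below -/
import Mathlib

section
/- Let I ⊆ ℝ be a non-empty open interval, T, L ∈ [0,∞), n ∈ ℕ₀, and let θ = (t₀,…,t_n) ∈ [0,T]^{n+1} satisfy 0 = t₀ < t₁ < … < t_n = T and L|θ| < 1, where |θ| := max_{k∈{1,…,n}} (t_k − t_{k−1}). Let μ : cl(I) → ℝ be Borel measurable and satisfy (x−y)(μ(x)−μ(y)) ≤ L(x−y)² for all x, y ∈ I. Let (Ω, 𝓕, ℙ, (𝓕_t)_{t∈[0,T]}) be a filtered probability space whose filtration satisfies the usual conditions, let W : [0,T]×Ω → ℝ be a standard (𝓕_t)-Brownian motion, let X : [0,T]×Ω → cl(I) be an (𝓕_t)-adapted stochastic process with continuous sample paths such that ℙ-a.s. ∫_0^T |μ(X_s)| ds < ∞ and for every t ∈ [0,T] it holds ℙ-a.s. that X_t = X_0 + ∫_0^t μ(X_s) ds + W_t, and let Y : {t₀,…,t_n}×Ω → I be measurable with Y_{t_{k+1}} = Y_{t_k} + μ(Y_{t_{k+1}})(t_{k+1}−t_k) + (W_{t_{k+1}} − W_{t_k})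 ℙ-a.s. for all k ∈ {0,…,n−1}. Assume sup_{i∈{0,…,n}} ℙ[X_{t_i} ∈ ∂I] = 0. For i ∈ {1,…,n} set D_i := (μ(X_{t_i}) − μ(Y_{t_i}))/(X_{t_i} − Y_{t_i}) with the convention 0/0 := 0. Then ℙ-a.s., for all k ∈ {0,…,n}: (i) (X_{t_k} − Y_{t_k})·∏_{i=0}^{k−1}(1 − (t_{i+1}−t_i)·D_{i+1}) = X_0 − Y_0 + ∫_0^{t_k} (μ(X_s) − μ(X_{⌈s⌉_θ})) · ∏_{i∈{0,…,n−1}: t_{i+1} ≤ ⌊s⌋_θ} (1 − (t_{i+1}−t_i)·D_{i+1}) ds; and (ii) |X_{t_k} − Y_{t_k}| ≤ (1/(1−|θ|L))^k · ( |X_0 − Y_0| + ∫_0^{t_k} |μ(X_s) − μ(X_{⌈s⌉_θ})| ds ). -/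
open MeasureTheory ProbabilityTheory Filter Set
open scoped ENNReal NNReal

noncomputable section

/-- The largest grid point of the grid `t 0 < t 1 < ... < t n` which is `≤ s`. -/
def gridFloor (n : ℕ) (t : ℕ → ℝ) (s : ℝ) : ℝ :=
  sSup {x | (∃ i ≤ n, x = t i) ∧ x ≤ s}

/-- The smallest grid point of the grid `t 0 < t 1 < ... < t n` which is `≥ s`. -/
def gridCeil (n : ℕ) (t : ℕ → ℝ) (s : ℝ) : ℝ :=
  sInf {x | (∃ i ≤ n, x = t i) ∧ s ≤ x}

/-- The mesh size `|θ| = max_k (t_k - t_{k-1})` of the grid `t 0 < t 1 < ... < t n`. -/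
def gridMesh (n : ℕ) (t : ℕ → ℝ) : ℝ := ⨆ i : Fin n, (t (i.1 + 1) - t i.1)

/-!
Write `e_k = X_{t_k} - Y_k` and `D_{k+1}` for the difference quotient of `μ` between `Y_{k+1}` and
`X_{t_{k+1}}`. Subtracting the implicit Euler step from the SDE over `[t_k, t_{k+1}]` cancels the
noise and, since `e_{k+1} D_{k+1} = μ(X_{t_{k+1}}) - μ(Y_{k+1})`, leaves the linear recursion
`e_{k+1} (1 - (t_{k+1} - t_k) D_{k+1}) = e_k + ∫_{t_k}^{t_{k+1}} (μ(X_s) - μ(X_{t_{k+1}})) ds`.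
Multiplying by the earlier factors and telescoping gives the representation. The one-sided
Lipschitz condition says `D_{k+1} ≤ L`, so every factor is at least `1 - |θ| L > 0`, and a discrete
Gronwall argument gives the bound.
-/

section Recursion

variable {R : Type*} [CommSemiring R]

lemma mul_prod_range_eq_add_sum_of_step {e f a : ℕ → R} {k : ℕ}
    (h : ∀ i < k, e (i + 1) * f i = e i + a i) :
    e k * ∏ i ∈ Finset.range k, f i
      = e 0 + ∑ j ∈ Finset.range k, a j * ∏ i ∈ Finset.range j, f i := by
  induction k with
  | zero => simp
  | succ k ih =>
    calc e (k + 1) * ∏ i ∈ Finset.range (k + 1), f i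
        = (e (k + 1) * f k) * ∏ i ∈ Finset.range k, f i := by rw [Finset.prod_range_succ]; ring
      _ = e k * ∏ i ∈ Finset.range k, f i + a k * ∏ i ∈ Finset.range k, f i := by
        rw [h k k.lt_succ_self, add_mul]
      _ = _ := by
        rw [ih fun i hi => h i (hi.trans k.lt_succ_self), Finset.sum_range_succ, add_assoc]

lemma le_pow_mul_add_sum_of_step [PartialOrder R] [IsOrderedRing R] {u b : ℕ → R} {r : R} {k : ℕ}
    (hr : 1 ≤ r) (hb : ∀ i < k, 0 ≤ b i) (h : ∀ i < k, u (i + 1) ≤ r * (u i + b i)) :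
    u k ≤ r ^ k * (u 0 + ∑ j ∈ Finset.range k, b j) := by
  have hr₀ : 0 ≤ r := zero_le_one.trans hr
  induction k with
  | zero => simp
  | succ k ih =>
    have hk := k.lt_succ_self
    calc u (k + 1) ≤ r * (u k + b k) := h k hk
      _ ≤ r * (r ^ k * (u 0 + ∑ j ∈ Finset.range k, b j) + r ^ k * b k) := by
        gcongr
        · exact ih (fun i hi => hb i (hi.trans hk)) fun i hi => h i (hi.trans hk)
        · exact le_mul_of_one_le_left (hb k hk) (one_le_pow₀ hr)
      _ = r ^ (k + 1) * (u 0 + ∑ j ∈ Finset.range (k + 1), b j) := by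
        rw [Finset.sum_range_succ]; ring

end Recursion

lemma slope_le_of_sub_mul_sub_le {K : Type*} [Field K] [LinearOrder K] [IsStrictOrderedRing K]
    {f : K → K} {L x y : K} (hL : 0 ≤ L) (h : (x - y) * (f x - f y) ≤ L * (x - y) ^ 2) :
    slope f y x ≤ L := by
  rcases eq_or_ne x y with rfl | hxy
  · simpa using hL
  · have hpos : 0 < (x - y) ^ 2 := sq_pos_of_ne_zero (sub_ne_zero.2 hxy)
    refine le_of_mul_le_mul_right ?_ hpos
    calc slope f y x * (x - y) ^ 2 = (x - y) * ((x - y) • slope f y x) := by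
          rw [smul_eq_mul]; ring
      _ = (x - y) * (f x - f y) := by rw [sub_smul_slope, vsub_eq_sub]
      _ ≤ L * (x - y) ^ 2 := h

section Grid

variable {n k : ℕ} {t : ℕ → ℝ}

lemma gridFloor_eq_of_mem_Ico (ht : MonotoneOn t (Iic n)) (hk : k < n) {s : ℝ}
    (hs : s ∈ Ico (t k) (t (k + 1))) : gridFloor n t s = t k := by
  refine IsGreatest.csSup_eq ⟨⟨⟨k, hk.le, rfl⟩, hs.1⟩, ?_⟩
  rintro _ ⟨⟨i, hi, rfl⟩, his⟩
  have hik : i ≤ k := by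
    by_contra! hki
    exact (his.trans_lt hs.2).not_ge (ht hk hi hki)
  exact ht hi hk.le hik

lemma gridCeil_eq_of_mem_Ioc (ht : MonotoneOn t (Iic n)) (hk : k < n) {s : ℝ}
    (hs : s ∈ Ioc (t k) (t (k + 1))) : gridCeil n t s = t (k + 1) := by
  refine IsLeast.csInf_eq ⟨⟨⟨k + 1, hk, rfl⟩, hs.2⟩, ?_⟩
  rintro _ ⟨⟨i, hi, rfl⟩, his⟩
  have hki : k + 1 ≤ i := by
    by_contra! hik
    exact (hs.1.trans_le his).not_ge (ht hi hk.le (Nat.lt_succ_iff.1 hik))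
  exact ht hk hi hki

lemma filter_range_succ_le_grid (ht : MonotoneOn t (Iic n)) (hk : k < n) (hlt : t k < t (k + 1)) :
    (Finset.range n).filter (fun i => t (i + 1) ≤ t k) = Finset.range k := by
  ext i
  simp only [Finset.mem_filter, Finset.mem_range]
  refine ⟨fun ⟨hi, hle⟩ => ?_, fun hi => ⟨hi.trans hk, ht (hi.trans hk) hk.le hi⟩⟩
  by_contra! hki
  exact (hle.trans_lt hlt).not_ge (ht hk hi (Nat.succ_le_succ hki))

lemma step_le_gridMesh (t : ℕ → ℝ) (hk : k < n) : t (k + 1) - t k ≤ gridMesh n t :=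
  le_ciSup (f := fun i : Fin n => t (i.1 + 1) - t i.1) (finite_range _).bddAbove ⟨k, hk⟩

lemma grid_le_succ (ht : MonotoneOn t (Iic n)) (hk : k < n) : t k ≤ t (k + 1) :=
  ht hk.le hk k.le_succ

lemma gridMesh_nonneg (ht : MonotoneOn t (Iic n)) : 0 ≤ gridMesh n t :=
  Real.iSup_nonneg fun i => sub_nonneg.2 (grid_le_succ ht i.2)

variable {E : Type*} [NormedAddCommGroup E]

lemma intervalIntegrable_grid_step (ht : MonotoneOn t (Iic n)) {f : ℝ → E} {ν : Measure ℝ}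
    (hf : IntervalIntegrable f ν (t 0) (t n)) (hk : k < n) :
    IntervalIntegrable f ν (t k) (t (k + 1)) := by
  have hmem {i : ℕ} (hi : i ≤ n) : t i ∈ uIcc (t 0) (t n) :=
    Icc_subset_uIcc ⟨ht n.zero_le hi i.zero_le, ht hi (mem_Iic.2 le_rfl) hi⟩
  exact hf.mono_set (uIcc_subset_uIcc (hmem hk.le) (hmem hk))

lemma integral_grid_eq_sum_of_eqOn_Ioo [NormedSpace ℝ E] {F : ℝ → E} {g : ℕ → ℝ → E}
    {ν : Measure ℝ} [NullSingletonClass ν] (ht : ∀ j < k, t j ≤ t (j + 1))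
    (hg : ∀ j < k, IntervalIntegrable (g j) ν (t j) (t (j + 1)))
    (hgF : ∀ j < k, EqOn (g j) F (Ioo (t j) (t (j + 1)))) :
    ∫ s in t 0..t k, F s ∂ν = ∑ j ∈ Finset.range k, ∫ s in t j..t (j + 1), g j s ∂ν := by
  have hF : ∀ j < k, IntervalIntegrable F ν (t j) (t (j + 1)) := fun j hj =>
    (hg j hj).congr_uIoo (by rw [uIoo_of_le (ht j hj)]; exact hgF j hj)
  rw [← intervalIntegral.sum_integral_adjacent_intervals hF]
  refine Finset.sum_congr rfl fun j hj => ?_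
  have hj := Finset.mem_range.1 hj
  exact (intervalIntegral.integral_congr_Ioo_of_le (ht j hj) (hgF j hj)).symm

end Grid

section Pathwise

/-- The factor `1 - (t_{i+1} - t_i) D_{i+1}` by which the `i`-th implicit Euler step contracts or
expands the error between a path `x` and its approximation `y`. As `slope μ a a = 0`, the
difference quotient `D_{i+1}` obeys the convention `0 / 0 = 0`. -/
def implicitEulerFactor (μ : ℝ → ℝ) (t : ℕ → ℝ) (x : ℝ → ℝ) (y : ℕ → ℝ) (i : ℕ) : ℝ :=
  1 - (t (i + 1) - t i) * slope μ (y (i + 1)) (x (t (i + 1)))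

variable {n k : ℕ} {t : ℕ → ℝ} {μ x : ℝ → ℝ} {y ΔW : ℕ → ℝ}

lemma error_mul_implicitEulerFactor
    (hint : IntervalIntegrable (fun s => μ (x s)) volume (t k) (t (k + 1)))
    (hx : x (t (k + 1)) = x (t k) + (∫ s in t k..t (k + 1), μ (x s)) + ΔW k)
    (hy : y (k + 1) = y k + μ (y (k + 1)) * (t (k + 1) - t k) + ΔW k) :
    (x (t (k + 1)) - y (k + 1)) * implicitEulerFactor μ t x y k
      = x (t k) - y k + ∫ s in t k..t (k + 1), (μ (x s) - μ (x (t (k + 1)))) := by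
  have hslope : (x (t (k + 1)) - y (k + 1)) * slope μ (y (k + 1)) (x (t (k + 1)))
      = μ (x (t (k + 1))) - μ (y (k + 1)) := sub_smul_slope μ _ _
  rw [intervalIntegral.integral_sub hint intervalIntegrable_const,
    intervalIntegral.integral_const, smul_eq_mul, implicitEulerFactor]
  linear_combination hx - hy - (t (k + 1) - t k) * hslope

lemma one_sub_gridMesh_mul_le_implicitEulerFactor {L : ℝ} (hL : 0 ≤ L) (hk : k < n)
    (ht : t k ≤ t (k + 1))
    (hμ : (x (t (k + 1)) - y (k + 1)) * (μ (x (t (k + 1))) - μ (y (k + 1)))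
      ≤ L * (x (t (k + 1)) - y (k + 1)) ^ 2) :
    1 - gridMesh n t * L ≤ implicitEulerFactor μ t x y k := by
  have hslope : slope μ (y (k + 1)) (x (t (k + 1))) ≤ L := slope_le_of_sub_mul_sub_le hL hμ
  refine sub_le_sub_left ?_ 1
  calc (t (k + 1) - t k) * slope μ (y (k + 1)) (x (t (k + 1))) ≤ (t (k + 1) - t k) * L :=
        mul_le_mul_of_nonneg_left hslope (sub_nonneg.2 ht)
    _ ≤ gridMesh n t * L := mul_le_mul_of_nonneg_right (step_le_gridMesh t hk) hL

theorem error_mul_prod_implicitEulerFactor (ht : MonotoneOn t (Iic n))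
    (hint : IntervalIntegrable (fun s => μ (x s)) volume (t 0) (t n))
    (hx : ∀ i < n, x (t (i + 1)) = x (t i) + (∫ s in t i..t (i + 1), μ (x s)) + ΔW i)
    (hy : ∀ i < n, y (i + 1) = y i + μ (y (i + 1)) * (t (i + 1) - t i) + ΔW i) (hk : k ≤ n) :
    (x (t k) - y k) * ∏ i ∈ Finset.range k, implicitEulerFactor μ t x y i
      = x (t 0) - y 0 + ∫ s in t 0..t k, (μ (x s) - μ (x (gridCeil n t s))) *
          ∏ i ∈ (Finset.range n).filter (fun i => t (i + 1) ≤ gridFloor n t s),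
            implicitEulerFactor μ t x y i := by
  have hstep {i : ℕ} (hi : i < n) := intervalIntegrable_grid_step ht hint hi
  have htelescope := mul_prod_range_eq_add_sum_of_step (e := fun j => x (t j) - y j) fun i hi =>
    have hi := hi.trans_le hk
    error_mul_implicitEulerFactor (hstep hi) (hx i hi) (hy i hi)
  rw [htelescope, integral_grid_eq_sum_of_eqOn_Ioo (t := t)
    (g := fun j s => (μ (x s) - μ (x (t (j + 1)))) *
      ∏ i ∈ Finset.range j, implicitEulerFactor μ t x y i)
    (fun j hj => grid_le_succ ht (hj.trans_le hk))
    (fun j hj => ((hstep (hj.trans_le hk)).sub intervalIntegrable_const).mul_const _)]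
  · simp only [intervalIntegral.integral_mul_const]
  · intro j hj s hs
    have hj := hj.trans_le hk
    simp only [gridFloor_eq_of_mem_Ico ht hj (Ioo_subset_Ico_self hs),
      gridCeil_eq_of_mem_Ioc ht hj (Ioo_subset_Ioc_self hs),
      filter_range_succ_le_grid ht hj (hs.1.trans hs.2)]

lemma abs_error_succ_le_of_le_implicitEulerFactor {c : ℝ} (hc : 0 < c)
    (hle : c ≤ implicitEulerFactor μ t x y k) (ht : t k ≤ t (k + 1))
    (hint : IntervalIntegrable (fun s => μ (x s)) volume (t k) (t (k + 1)))
    (hx : x (t (k + 1)) = x (t k) + (∫ s in t k..t (k + 1), μ (x s)) + ΔW k)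
    (hy : y (k + 1) = y k + μ (y (k + 1)) * (t (k + 1) - t k) + ΔW k) :
    |x (t (k + 1)) - y (k + 1)|
      ≤ 1 / c * (|x (t k) - y k| + ∫ s in t k..t (k + 1), |μ (x s) - μ (x (t (k + 1)))|) := by
  rw [one_div, le_inv_mul_iff₀' hc]
  calc |x (t (k + 1)) - y (k + 1)| * c
      ≤ |x (t (k + 1)) - y (k + 1)| * |implicitEulerFactor μ t x y k| := by
        gcongr; exact hle.trans (le_abs_self _)
    _ = |x (t k) - y k + ∫ s in t k..t (k + 1), (μ (x s) - μ (x (t (k + 1))))| := by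
        rw [← abs_mul, error_mul_implicitEulerFactor hint hx hy]
    _ ≤ |x (t k) - y k| + |∫ s in t k..t (k + 1), (μ (x s) - μ (x (t (k + 1))))| :=
        abs_add_le _ _
    _ ≤ _ := by gcongr; exact intervalIntegral.abs_integral_le_integral_abs ht

theorem abs_error_le_pow_mul_add_integral (ht : MonotoneOn t (Iic n)) {L : ℝ} (hL : 0 ≤ L)
    (hmesh : L * gridMesh n t < 1)
    (hμ : ∀ i < n, (x (t (i + 1)) - y (i + 1)) * (μ (x (t (i + 1))) - μ (y (i + 1)))
      ≤ L * (x (t (i + 1)) - y (i + 1)) ^ 2)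
    (hint : IntervalIntegrable (fun s => μ (x s)) volume (t 0) (t n))
    (hx : ∀ i < n, x (t (i + 1)) = x (t i) + (∫ s in t i..t (i + 1), μ (x s)) + ΔW i)
    (hy : ∀ i < n, y (i + 1) = y i + μ (y (i + 1)) * (t (i + 1) - t i) + ΔW i) (hk : k ≤ n) :
    |x (t k) - y k| ≤ (1 / (1 - gridMesh n t * L)) ^ k *
      (|x (t 0) - y 0| + ∫ s in t 0..t k, |μ (x s) - μ (x (gridCeil n t s))|) := by
  have hstep {i : ℕ} (hi : i < n) := intervalIntegrable_grid_step ht hint hi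
  have hle {i : ℕ} (hi : i < k) := grid_le_succ ht (hi.trans_le hk)
  have hc : 0 < 1 - gridMesh n t * L := sub_pos.2 (by rwa [mul_comm])
  have hr : 1 ≤ 1 / (1 - gridMesh n t * L) :=
    one_le_one_div hc (sub_le_self 1 (mul_nonneg (gridMesh_nonneg ht) hL))
  have hsum : ∫ s in t 0..t k, |μ (x s) - μ (x (gridCeil n t s))|
      = ∑ j ∈ Finset.range k, ∫ s in t j..t (j + 1), |μ (x s) - μ (x (t (j + 1)))| := by
    refine integral_grid_eq_sum_of_eqOn_Ioo (fun j hj => hle hj)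
      (fun j hj => ((hstep (hj.trans_le hk)).sub intervalIntegrable_const).abs)
      fun j hj s hs => ?_
    simp only [gridCeil_eq_of_mem_Ioc ht (hj.trans_le hk) (Ioo_subset_Ioc_self hs)]
  rw [hsum]
  refine le_pow_mul_add_sum_of_step (u := fun j => |x (t j) - y j|) hr
    (fun i hi => intervalIntegral.integral_nonneg (hle hi) fun _ _ => abs_nonneg _) fun i hi => ?_
  have hi' := hi.trans_le hk
  exact abs_error_succ_le_of_le_implicitEulerFactor hc
    (one_sub_gridMesh_mul_le_implicitEulerFactor hL hi' (hle hi) (hμ i hi')) (hle hi)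
    (hstep hi') (hx i hi') (hy i hi')

lemma eq_add_integral_step_of_eq_add_integral {w : ℝ → ℝ} (ht : MonotoneOn t (Iic n))
    (hint : IntervalIntegrable (fun s => μ (x s)) volume (t 0) (t n))
    (hx : ∀ i ≤ n, x (t i) = x (t 0) + (∫ s in t 0..t i, μ (x s)) + w (t i)) (hk : k < n) :
    x (t (k + 1)) = x (t k) + (∫ s in t k..t (k + 1), μ (x s)) + (w (t (k + 1)) - w (t k)) := by
  have hstep {i : ℕ} (hi : i < n) := intervalIntegrable_grid_step ht hint hi
  have hadd := intervalIntegral.integral_add_adjacent_intervals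
    (IntervalIntegrable.trans_iterate (a := t) fun j hj => hstep (hj.trans hk)) (hstep hk)
  linear_combination hx (k + 1) hk - hx k hk.le - hadd

end Pathwise

lemma intervalIntegrable_comp_of_abs {g x : ℝ → ℝ} {a b : ℝ} {ν : Measure ℝ} (hg : Measurable g)
    (hx : ContinuousOn x (uIcc a b)) (h : IntervalIntegrable (fun s => |g (x s)|) ν a b) :
    IntervalIntegrable (fun s => g (x s)) ν a b :=
  (IntervalIntegrable.intervalIntegrable_norm_iff (hg.comp_aemeasurable
    ((hx.mono uIoc_subset_uIcc).aemeasurable measurableSet_uIoc)).aestronglyMeasurable).1 h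

lemma ae_mem_of_mem_closure_of_frontier_null {Ω α : Type*} [MeasurableSpace Ω]
    [TopologicalSpace α] {P : Measure Ω} {I : Set α} {Z : Ω → α} (hZ : ∀ᵐ ω ∂P, Z ω ∈ closure I)
    (hI : P {ω | Z ω ∈ frontier I} = 0) : ∀ᵐ ω ∂P, Z ω ∈ I := by
  filter_upwards [hZ, measure_eq_zero_iff_ae_notMem.1 hI] with ω hcl hfr
  exact interior_subset (closure_sdiff_frontier I ▸ ⟨hcl, hfr⟩)

theorem drift_implicit_Euler_representation_and_pathwise_bound_general
    {Ω : Type*} [MeasurableSpace Ω] (P : Measure Ω) (I : Set ℝ) (L : ℝ) (hL : 0 ≤ L)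
    (n : ℕ) (t : ℕ → ℝ) (ht0 : t 0 = 0) (htmono : MonotoneOn t (Iic n))
    (hmesh : L * gridMesh n t < 1)
    (μ : ℝ → ℝ) (hμosl : ∀ x ∈ I, ∀ y ∈ I, (x - y) * (μ x - μ y) ≤ L * (x - y) ^ 2)
    (W X : ℝ → Ω → ℝ)
    (hXmem : ∀ i < n, ∀ᵐ ω ∂P, X (t (i + 1)) ω ∈ I)
    (hXint : ∀ᵐ ω ∂P, IntervalIntegrable (fun s => μ (X s ω)) volume 0 (t n))
    (hSDE : ∀ i ≤ n, ∀ᵐ ω ∂P,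
      X (t i) ω = X 0 ω + (∫ s in (0 : ℝ)..t i, μ (X s ω)) + W (t i) ω)
    (Y : ℕ → Ω → ℝ)
    (hYmem : ∀ i < n, ∀ᵐ ω ∂P, Y (i + 1) ω ∈ I)
    (hYrec : ∀ k < n, ∀ᵐ ω ∂P,
      Y (k + 1) ω = Y k ω + μ (Y (k + 1) ω) * (t (k + 1) - t k)
        + (W (t (k + 1)) ω - W (t k) ω)) :
    ∀ᵐ ω ∂P, ∀ k ≤ n,
      ((X (t k) ω - Y k ω) *
          ∏ i ∈ Finset.range k,
            (1 - (t (i + 1) - t i) *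
              ((μ (X (t (i + 1)) ω) - μ (Y (i + 1) ω)) / (X (t (i + 1)) ω - Y (i + 1) ω)))
        = X 0 ω - Y 0 ω
          + ∫ s in (0:ℝ)..(t k),
              (μ (X s ω) - μ (X (gridCeil n t s) ω)) *
                ∏ i ∈ (Finset.range n).filter (fun i => t (i + 1) ≤ gridFloor n t s),
                  (1 - (t (i + 1) - t i) *
                    ((μ (X (t (i + 1)) ω) - μ (Y (i + 1) ω)) / (X (t (i + 1)) ω - Y (i + 1) ω))))
      ∧ |X (t k) ω - Y k ω|
          ≤ (1 / (1 - gridMesh n t * L)) ^ k *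
            (|X 0 ω - Y 0 ω| + ∫ s in (0:ℝ)..(t k), |μ (X s ω) - μ (X (gridCeil n t s) ω)|) := by
  simp only [← slope_def_field]
  rw [← ht0] at hXint hSDE ⊢
  filter_upwards [(eventually_all_finite (finite_Iio n)).2 hXmem,
    (eventually_all_finite (finite_Iio n)).2 hYmem, (eventually_all_finite (finite_Iic n)).2 hSDE,
    (eventually_all_finite (finite_Iio n)).2 hYrec, hXint] with ω hXI hYI hX hY hint k hk
  have hstep (i : ℕ) (hi : i < n) :=
    eq_add_integral_step_of_eq_add_integral (w := fun s => W s ω) htmono hint hX hi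
  exact ⟨error_mul_prod_implicitEulerFactor (y := fun i => Y i ω) htmono hint hstep hY hk,
    abs_error_le_pow_mul_add_integral (y := fun i => Y i ω) htmono hL hmesh
      (fun i hi => hμosl _ (hXI i hi) _ (hYI i hi)) hint hstep hY hk⟩

theorem drift_implicit_Euler_representation_and_pathwise_bound
    {Ω : Type*} [MeasurableSpace Ω] (P : Measure Ω) [IsProbabilityMeasure P]
    (I : Set ℝ) (hInonempty : I.Nonempty) (hIopen : IsOpen I) (hIconn : I.OrdConnected)
    (T L : ℝ) (hT : 0 ≤ T) (hL : 0 ≤ L)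
    (n : ℕ) (t : ℕ → ℝ)
    (ht0 : t 0 = 0) (htn : t n = T) (htmono : ∀ i < n, t i < t (i + 1))
    (htmem : ∀ i ≤ n, t i ∈ Set.Icc (0:ℝ) T)
    (hmesh : L * gridMesh n t < 1)
    (μ : ℝ → ℝ) (hμmeas : Measurable μ)
    (hμosl : ∀ x ∈ I, ∀ y ∈ I, (x - y) * (μ x - μ y) ≤ L * (x - y) ^ 2)
    (F : ℝ → MeasurableSpace Ω)
    (hF_mono : ∀ s u : ℝ, s ≤ u → F s ≤ F u)
    (hF_le : ∀ u : ℝ, F u ≤ (inferInstance : MeasurableSpace Ω))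
    (W X : ℝ → Ω → ℝ)
    (hW0 : ∀ ω, W 0 ω = 0)
    (hWadapt : ∀ u ∈ Set.Icc (0:ℝ) T, @Measurable Ω ℝ (F u) _ (W u))
    (hWcont : ∀ ω, ContinuousOn (fun u => W u ω) (Set.Icc 0 T))
    (hWlaw : ∀ s u : ℝ, 0 ≤ s → s ≤ u → u ≤ T →
      Measure.map (fun ω => W u ω - W s ω) P = gaussianReal 0 (Real.toNNReal (u - s)))
    (hWindep : ∀ s u : ℝ, 0 ≤ s → s ≤ u → u ≤ T →
      Indep (MeasurableSpace.comap (fun ω => W u ω - W s ω) inferInstance) (F s) P)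
    (hXmem : ∀ u ∈ Set.Icc (0:ℝ) T, ∀ ω, X u ω ∈ closure I)
    (hXadapt : ∀ u ∈ Set.Icc (0:ℝ) T, @Measurable Ω ℝ (F u) _ (X u))
    (hXcont : ∀ ω, ContinuousOn (fun u => X u ω) (Set.Icc 0 T))
    (hXint : ∀ᵐ ω ∂P, IntervalIntegrable (fun s => |μ (X s ω)|) volume 0 T)
    (hSDE : ∀ u ∈ Set.Icc (0:ℝ) T, ∀ᵐ ω ∂P,
      X u ω = X 0 ω + (∫ s in (0:ℝ)..u, μ (X s ω)) + W u ω)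
    (Y : ℕ → Ω → ℝ)
    (hYmeas : ∀ k ≤ n, Measurable (Y k))
    (hYmem : ∀ k ≤ n, ∀ ω, Y k ω ∈ I)
    (hYrec : ∀ k < n, ∀ᵐ ω ∂P,
      Y (k + 1) ω = Y k ω + μ (Y (k + 1) ω) * (t (k + 1) - t k)
        + (W (t (k + 1)) ω - W (t k) ω))
    (hboundary : ∀ i ≤ n, P {ω | X (t i) ω ∈ frontier I} = 0) :
    ∀ᵐ ω ∂P, ∀ k ≤ n,
      ((X (t k) ω - Y k ω) *
          ∏ i ∈ Finset.range k,
            (1 - (t (i + 1) - t i) *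
              ((μ (X (t (i + 1)) ω) - μ (Y (i + 1) ω)) / (X (t (i + 1)) ω - Y (i + 1) ω)))
        = X 0 ω - Y 0 ω
          + ∫ s in (0:ℝ)..(t k),
              (μ (X s ω) - μ (X (gridCeil n t s) ω)) *
                ∏ i ∈ (Finset.range n).filter (fun i => t (i + 1) ≤ gridFloor n t s),
                  (1 - (t (i + 1) - t i) *
                    ((μ (X (t (i + 1)) ω) - μ (Y (i + 1) ω)) / (X (t (i + 1)) ω - Y (i + 1) ω))))
      ∧ |X (t k) ω - Y k ω|
          ≤ (1 / (1 - gridMesh n t * L)) ^ k *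
            (|X 0 ω - Y 0 ω| + ∫ s in (0:ℝ)..(t k), |μ (X s ω) - μ (X (gridCeil n t s) ω)|) := by
  subst htn
  exact drift_implicit_Euler_representation_and_pathwise_bound_general P I L hL n t ht0
    (strictMonoOn_Iic_of_lt_succ htmono).monotoneOn hmesh μ hμosl W X
    (fun i hi => ae_mem_of_mem_closure_of_frontier_null
      (ae_of_all P (hXmem _ (htmem _ hi))) (hboundary _ hi))
    (hXint.mono fun ω =>
      intervalIntegrable_comp_of_abs hμmeas (by simpa only [uIcc_of_le hT] using hXcont ω))
    (fun i hi => hSDE _ (htmem i hi)) Y (fun i hi => ae_of_all P (hYmem _ hi)) hYrec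

end
end

section
/- Let d, m ∈ ℕ, c, c̃, T ∈ [0,∞), p ∈ [2,∞), let O ⊆ ℝ^d be a Borel set, let μ : O → ℝ^d and σ : O → ℝ^{d×m} be Borel measurable, let (Ω, 𝓕, ℙ, (𝓕_t)_{t∈[0,T]}) be a filtered probability space, let W : [0,T]×Ω → ℝ^m be a standard (𝓕_t)-Brownian motion, let ξ : Ω → O be 𝓕₀-measurable with E[‖μ(ξ)‖^p] < ∞, assume ⟨x−y, μ(x)−μ(y)⟩ ≤ c‖x−y‖² and ⟨x, μ(x)⟩ + ((p−1)/2)·‖σ(x)‖_{HS}² ≤ c̃(1+‖x‖²) for all x, y ∈ O (Euclidean inner product and norm, Hilbert–Schmidt norm), and assume that for every t ∈ (0, 1/c) the map O ∋ x ↦ x − t·μ(x) ∈ ℝ^d is surjective. Then: (a) there exists a unique family of stochastic processes Y^h : (ℕ₀ ∩ [0, T/h])×Ω → O, indexed by h ∈ (0,T] ∩ (0, 1/c), satisfying Y₀^h = ξ and Y_n^h = Y_{n−1}^h + μ(Y_n^h)·h + σ(Y_{n−1}^h)(W_{nh} − W_{(n−1)h}) for all n ∈ ℕ ∩ [0, T/h];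 and (b) there exists ρ ∈ (0,∞) such that for all q ∈ [0, p/2] it holds that limsup_{h↘0} sup_{n∈ℕ₀∩[0,T/h]} E[(1+‖Y_n^h‖²)^q] ≤ e^{ρT}·E[(1+‖ξ‖²)^q] and sup_{h∈(0,T]∩(0,1/(4c)]} sup_{n∈ℕ₀∩[0,T/h]} E[(1+‖Y_n^h‖²)^q] ≤ e^{(4c+ρ)T}·E[(1 + (‖ξ‖ + T‖μ(ξ)‖)²)^q]. -/
open MeasureTheory ProbabilityTheory Filter Set
open scoped ENNReal NNReal RealInnerProductSpace

noncomputable section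

attribute [local instance] Matrix.frobeniusSeminormedAddCommGroup
  Matrix.frobeniusNormedAddCommGroup

/-- Action of a `d × m` matrix on a vector of `EuclideanSpace ℝ (Fin m)`. -/
def matMulVec {d m : ℕ} (A : Matrix (Fin d) (Fin m) ℝ) (v : EuclideanSpace ℝ (Fin m)) :
    EuclideanSpace ℝ (Fin d) :=
  (EuclideanSpace.equiv (Fin d) ℝ).symm (A.mulVec ((EuclideanSpace.equiv (Fin m) ℝ) v))

/-- The drift-implicit Euler scheme with initial value `ξ`, drift `b`, diffusion `σ`
and driving noise `W`, for all step sizes `h ∈ (0,T] ∩ (0, 1/cdrift)`. -/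
def ImplicitEulerScheme {Ω : Type*} (d m : ℕ) (T cdrift : ℝ)
    (O : Set (EuclideanSpace ℝ (Fin d)))
    (b : EuclideanSpace ℝ (Fin d) → EuclideanSpace ℝ (Fin d))
    (σ : EuclideanSpace ℝ (Fin d) → Matrix (Fin d) (Fin m) ℝ)
    (ξ : Ω → EuclideanSpace ℝ (Fin d))
    (W : ℝ → Ω → EuclideanSpace ℝ (Fin m))
    (Y : ℝ → ℕ → Ω → EuclideanSpace ℝ (Fin d)) : Prop :=
  ∀ h : ℝ, h ∈ Set.Ioc (0:ℝ) T → h * cdrift < 1 →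
    (∀ ω, Y h 0 ω = ξ ω) ∧
    ∀ n : ℕ, 1 ≤ n → (n : ℝ) ≤ T / h → ∀ ω,
      Y h n ω ∈ O ∧
      Y h n ω = Y h (n - 1) ω + h • b (Y h n ω)
        + matMulVec (σ (Y h (n - 1) ω)) (W (n * h) ω - W (((n : ℕ) - 1 : ℕ) * h) ω)

/-!
The right quantity to follow is not `Yₙ` but `Zₙ = Yₙ - h • b Yₙ`, for which the scheme is explicit:
`Zₙ₊₁ = Yₙ + σ(Yₙ) ΔWₙ`. For a centred Gaussian `w` with covariance `h • 1` one has
`E (K + ‖y + A w‖²) ^ θ ≤ (K + ‖y‖² + (2θ - 1) h ‖A‖²) ^ θ`; in one dimension the integral of an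
interpolation between the two sides is monotone by Stein's identity. With `θ = p / 2` the constant
`2θ - 1 = p - 1` is exactly the one in the coercivity condition, which therefore absorbs the noise:
whenever `1 + ‖x‖² ≤ C (1 + ‖x - h • b x‖²)` on `O`, each step multiplies `E (1 + ‖Zₙ‖²) ^ q` by at
most `exp (2 ct C h) ^ q`.

Two choices of `C` lead back from `Z` to `Y`. Coercivity gives `C = (1 - 2 ct h)⁻¹`, which tends to
`1` as `h ↘ 0` and produces the sharp limsup bound. Comparison with a fixed point of `O` through the
one-sided Lipschitz condition gives a `C` that works for all `h ≤ 1 / (4c)` and produces the uniform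
bound.
-/

section Gaussian

lemma hasDerivAt_gaussianPDFReal (μ : ℝ) (v : ℝ≥0) (x : ℝ) :
    HasDerivAt (gaussianPDFReal μ v) (-((x - μ) / v) * gaussianPDFReal μ v x) x := by
  have hexponent : HasDerivAt (fun x : ℝ => -(x - μ) ^ 2 / (2 * v)) (-((x - μ) / v)) x :=
    ((((hasDerivAt_id x).sub_const μ).pow 2).neg.div_const _).congr_deriv (by
      rcases eq_or_ne (v : ℝ) 0 with hv | hv
      · simp [hv]
      · simp only [id]
        field_simp
        ring)
  rw [gaussianPDFReal_def]
  exact (hexponent.exp.const_mul _).congr_deriv (by ring)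

lemma integrable_mul_gaussianPDFReal {μ : ℝ} {v : ℝ≥0} (hv : v ≠ 0) {f : ℝ → ℝ}
    (hf : Integrable f (gaussianReal μ v)) : Integrable (fun x => f x * gaussianPDFReal μ v x) := by
  rw [gaussianReal_of_var_ne_zero _ hv,
    integrable_withDensity_iff (measurable_gaussianPDF _ _)
      (Eventually.of_forall fun _ => gaussianPDF_lt_top)] at hf
  simpa only [toReal_gaussianPDF] using hf

-- Stein's identity: integrate by parts, the logarithmic derivative of the density being
-- `-(x - μ) / v`.
lemma integral_sub_mul_gaussianReal {μ : ℝ} {v : ℝ≥0} {f f' : ℝ → ℝ}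
    (hderiv : ∀ x, HasDerivAt f (f' x) x) (hf : Integrable f (gaussianReal μ v))
    (hf' : Integrable f' (gaussianReal μ v))
    (hxf : Integrable (fun x => (x - μ) * f x) (gaussianReal μ v)) :
    ∫ x, (x - μ) * f x ∂gaussianReal μ v = v * ∫ x, f' x ∂gaussianReal μ v := by
  rcases eq_or_ne v 0 with rfl | hv
  · simp
  have hv' : (v : ℝ) ≠ 0 := by exact_mod_cast hv
  have hparts := integral_mul_deriv_eq_deriv_mul_of_integrable
    (fun x _ => hderiv x) (fun x _ => hasDerivAt_gaussianPDFReal μ v x)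
    (((integrable_mul_gaussianPDFReal hv hxf).const_mul (-(v : ℝ)⁻¹)).congr
      (Eventually.of_forall fun x => by simp only [Pi.mul_apply]; ring))
    (integrable_mul_gaussianPDFReal hv hf')
    (integrable_mul_gaussianPDFReal hv hf)
  simp only [integral_gaussianReal_eq_integral_smul hv, smul_eq_mul]
  calc ∫ x, gaussianPDFReal μ v x * ((x - μ) * f x)
      = ∫ x, -v * (f x * (-((x - μ) / v) * gaussianPDFReal μ v x)) := by
        congr 1 with x
        field_simp
    _ = v * ∫ x, f' x * gaussianPDFReal μ v x := by
        rw [integral_const_mul, hparts]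
        ring
    _ = v * ∫ x, gaussianPDFReal μ v x * f' x := by simp only [mul_comm]

lemma integrable_one_add_sq_rpow_gaussianReal (μ : ℝ) (v : ℝ≥0) (r : ℝ) :
    Integrable (fun x : ℝ => (1 + x ^ 2) ^ r) (gaussianReal μ v) := by
  have hpow : Integrable (fun x : ℝ => (x ^ 2) ^ ⌈r⌉₊) (gaussianReal μ v) := by
    have hmem : MemLp (id : ℝ → ℝ) (2 * ⌈r⌉₊ : ℕ) (gaussianReal μ v) := by
      exact_mod_cast memLp_id_gaussianReal (μ := μ) (v := v) ((2 * ⌈r⌉₊ : ℕ) : ℝ≥0)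
    simpa [pow_mul] using hmem.integrable_norm_pow'
  refine (((integrable_const 1).add hpow).const_mul (2 ^ (⌈r⌉₊ - 1))).mono'
    (Measurable.aestronglyMeasurable (by fun_prop)) (Eventually.of_forall fun x => ?_)
  rw [Real.norm_of_nonneg (by positivity)]
  calc (1 + x ^ 2) ^ r ≤ (1 + x ^ 2) ^ (⌈r⌉₊ : ℝ) :=
        Real.rpow_le_rpow_of_exponent_le (by nlinarith) (Nat.le_ceil r)
    _ = (1 + x ^ 2) ^ ⌈r⌉₊ := Real.rpow_natCast _ _
    _ ≤ 2 ^ (⌈r⌉₊ - 1) * (1 ^ ⌈r⌉₊ + (x ^ 2) ^ ⌈r⌉₊) := add_pow_le zero_le_one (sq_nonneg x) _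
    _ = _ := by simp

lemma add_sq_affine_le {κ L S α s x : ℝ} (hκ : κ ≤ L) (hL : 0 ≤ L) (hs : s ^ 2 ≤ S) :
    κ + (α + s * x) ^ 2 ≤ (L + 2 * α ^ 2 + 2 * S) * (1 + x ^ 2) := by
  have hsx : s ^ 2 * x ^ 2 ≤ S * x ^ 2 := by gcongr
  nlinarith [sq_nonneg (α - s * x), mul_nonneg hL (sq_nonneg x), (sq_nonneg s).trans hs,
    sq_nonneg (α * x)]

lemma abs_quadratic_le (a b c x : ℝ) :
    |a + b * x + c * x ^ 2| ≤ (|a| + |b| + |c|) * (1 + x ^ 2) := by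
  have hx : |x| ≤ 1 + x ^ 2 := abs_le.2 ⟨by nlinarith, by nlinarith⟩
  calc |a + b * x + c * x ^ 2| ≤ |a| + |b| * |x| + |c| * x ^ 2 := by
        refine (abs_add_three _ _ _).trans_eq ?_
        rw [abs_mul, abs_mul, abs_sq]
    _ ≤ |a| * (1 + x ^ 2) + |b| * (1 + x ^ 2) + |c| * (1 + x ^ 2) := by
        gcongr
        · nlinarith [abs_nonneg a, sq_nonneg x]
        · linarith
    _ = _ := by ring

lemma integrable_quadratic_mul_add_sq_rpow_gaussianReal (μ : ℝ) (v : ℝ≥0) {κ r : ℝ} (hκ : 0 < κ)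
    (hr : 0 ≤ r) (α s a b c : ℝ) :
    Integrable (fun x => (a + b * x + c * x ^ 2) * (κ + (α + s * x) ^ 2) ^ r)
      (gaussianReal μ v) := by
  refine ((integrable_one_add_sq_rpow_gaussianReal μ v (1 + r)).const_mul
    ((|a| + |b| + |c|) * (κ + 2 * α ^ 2 + 2 * s ^ 2) ^ r)).mono'
    (by fun_prop) (Eventually.of_forall fun x => ?_)
  rw [norm_mul, Real.norm_eq_abs, Real.norm_of_nonneg (by positivity)]
  calc |a + b * x + c * x ^ 2| * (κ + (α + s * x) ^ 2) ^ r
      ≤ (|a| + |b| + |c|) * (1 + x ^ 2)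
          * ((κ + 2 * α ^ 2 + 2 * s ^ 2) * (1 + x ^ 2)) ^ r := by
        gcongr
        · exact abs_quadratic_le a b c x
        · exact add_sq_affine_le le_rfl hκ.le le_rfl
    _ = _ := by
        rw [Real.mul_rpow (by positivity) (by positivity), Real.rpow_add (by positivity),
          Real.rpow_one]
        ring

lemma integrable_add_sq_rpow_gaussianReal (μ : ℝ) (v : ℝ≥0) {κ r : ℝ} (hκ : 0 < κ)
    (hr : 0 ≤ r) (α s : ℝ) :
    Integrable (fun x => (κ + (α + s * x) ^ 2) ^ r) (gaussianReal μ v) := by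
  simpa using integrable_quadratic_mul_add_sq_rpow_gaussianReal μ v hκ hr α s 1 0 0

lemma hasDerivAt_mul_add_sq_rpow {κ : ℝ} (hκ : 0 < κ) (r y : ℝ) :
    HasDerivAt (fun y => y * (κ + y ^ 2) ^ r)
      ((κ + y ^ 2) ^ r + 2 * r * (y ^ 2 * (κ + y ^ 2) ^ (r - 1))) y := by
  have hbase : HasDerivAt (fun y => κ + y ^ 2) (2 * y) y :=
    ((hasDerivAt_pow 2 y).const_add κ).congr_deriv (by norm_num)
  refine ((hasDerivAt_id y).mul (hbase.rpow_const (Or.inl (by positivity)))).congr_deriv ?_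
  simp only [id]
  ring

lemma sq_mul_add_sq_rpow_sub_one_le {κ : ℝ} (hκ : 0 < κ) (r y : ℝ) :
    y ^ 2 * (κ + y ^ 2) ^ (r - 1) ≤ (κ + y ^ 2) ^ r := by
  have hpos : 0 < κ + y ^ 2 := by positivity
  rw [Real.rpow_sub_one hpos.ne', ← mul_div_assoc, div_le_iff₀ hpos, mul_comm]
  gcongr
  linarith

lemma integral_mul_affine_mul_rpow_gaussianReal_le {κ r α s : ℝ} (hκ : 0 < κ) (hr : 0 ≤ r)
    (hs : 0 ≤ s) :
    ∫ x, x * ((α + s * x) * (κ + (α + s * x) ^ 2) ^ r) ∂gaussianReal 0 1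
      ≤ s * (2 * r + 1) * ∫ x, (κ + (α + s * x) ^ 2) ^ r ∂gaussianReal 0 1 := by
  set g' : ℝ → ℝ := fun y => (κ + y ^ 2) ^ r + 2 * r * (y ^ 2 * (κ + y ^ 2) ^ (r - 1)) with hg'
  have hg'_nonneg (y : ℝ) : 0 ≤ g' y := by positivity
  have hg'_le (y : ℝ) : g' y ≤ (2 * r + 1) * (κ + y ^ 2) ^ r := by
    have := mul_le_mul_of_nonneg_left (sq_mul_add_sq_rpow_sub_one_le hκ r y)
      (mul_nonneg zero_le_two hr)
    simp only [hg']
    linarith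
  have hint := integrable_add_sq_rpow_gaussianReal 0 1 hκ hr α s
  have hg'_meas : Measurable g' := by fun_prop
  have hg'_int : Integrable (fun x => g' (α + s * x)) (gaussianReal 0 1) :=
    (hint.const_mul (2 * r + 1)).mono' (hg'_meas.comp (by fun_prop)).aestronglyMeasurable
      (Eventually.of_forall fun x => by
        rw [Real.norm_of_nonneg (hg'_nonneg _)]
        exact hg'_le _)
  have hderiv (x : ℝ) : HasDerivAt (fun x => (α + s * x) * (κ + (α + s * x) ^ 2) ^ r)
      (s * g' (α + s * x)) x :=
    ((hasDerivAt_mul_add_sq_rpow hκ r (α + s * x)).comp (h := fun x => α + s * x) x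
      (((hasDerivAt_id x).const_mul s).const_add α)).congr_deriv (by rw [mul_one, mul_comm])
  have hstein := integral_sub_mul_gaussianReal (μ := 0) (v := 1) hderiv
    (by simpa using integrable_quadratic_mul_add_sq_rpow_gaussianReal 0 1 hκ hr α s α s 0)
    (hg'_int.const_mul s)
    ((integrable_quadratic_mul_add_sq_rpow_gaussianReal 0 1 hκ hr α s 0 α s).congr
      (Eventually.of_forall fun x => by ring_nf))
  calc ∫ x, x * ((α + s * x) * (κ + (α + s * x) ^ 2) ^ r) ∂gaussianReal 0 1
      = s * ∫ x, g' (α + s * x) ∂gaussianReal 0 1 := by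
        simpa [integral_const_mul] using hstein
    _ ≤ s * ∫ x, (2 * r + 1) * (κ + (α + s * x) ^ 2) ^ r ∂gaussianReal 0 1 := by
        gcongr
        · exact hint.const_mul _
        · exact fun x => hg'_le _
    _ = _ := by rw [integral_const_mul, mul_assoc]

/-- The integrand interpolating, as `s` runs from `0` to `β`, between the constant
`(K + α² + (2θ - 1)β²) ^ θ` and `(K + (α + β x)²) ^ θ`, where `L = K + (2θ - 1)β²`. -/
def gaussianInterpolant (θ L α s x : ℝ) : ℝ :=
  (L - (2 * θ - 1) * s ^ 2 + (α + s * x) ^ 2) ^ θ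

/-- The derivative of `gaussianInterpolant θ L α s x` in `s`. -/
def gaussianInterpolantDeriv (θ L α s x : ℝ) : ℝ :=
  (-(2 * (2 * θ - 1) * s) + 2 * α * x + 2 * s * x ^ 2) *
    (θ * (L - (2 * θ - 1) * s ^ 2 + (α + s * x) ^ 2) ^ (θ - 1))

variable {θ L α s x : ℝ}

lemma hasDerivAt_gaussianInterpolant (hs : (2 * θ - 1) * s ^ 2 < L) :
    HasDerivAt (fun s => gaussianInterpolant θ L α s x) (gaussianInterpolantDeriv θ L α s x) s := by
  have hbase : HasDerivAt (fun s => L - (2 * θ - 1) * s ^ 2 + (α + s * x) ^ 2)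
      (-(2 * (2 * θ - 1) * s) + 2 * α * x + 2 * s * x ^ 2) s :=
    ((((hasDerivAt_pow 2 s).const_mul (2 * θ - 1)).const_sub L).add
      ((((hasDerivAt_id s).mul_const x).const_add α).pow 2)).congr_deriv (by simp; ring)
  refine (hbase.rpow_const (p := θ) (Or.inl ?_)).congr_deriv (mul_assoc _ _ _)
  have := sq_nonneg (α + s * x)
  linarith

lemma abs_gaussianInterpolantDeriv_le (hθ : 1 ≤ θ) (hs : (2 * θ - 1) * s ^ 2 < L) :
    |gaussianInterpolantDeriv θ L α s x|
      ≤ (2 * (2 * θ - 1) * (1 + L) + 2 * |α| + 2 * (1 + L)) * θ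
        * (3 * L + 2 * α ^ 2) ^ (θ - 1) * (1 + x ^ 2) ^ θ := by
  have hθ' : 0 ≤ 2 * θ - 1 := by linarith
  have hs_sq : s ^ 2 ≤ L := by nlinarith [sq_nonneg s]
  have hs_abs : |s| ≤ 1 + L := abs_le.2 ⟨by nlinarith, by nlinarith⟩
  have hL : 0 ≤ L := (sq_nonneg s).trans hs_sq
  have : 0 ≤ L - (2 * θ - 1) * s ^ 2 + (α + s * x) ^ 2 := by
    have := sq_nonneg (α + s * x)
    linarith
  have hcoeffs : |-(2 * (2 * θ - 1) * s)| + |2 * α| + |2 * s|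
      ≤ 2 * (2 * θ - 1) * (1 + L) + 2 * |α| + 2 * (1 + L) := by
    simp only [abs_neg, abs_mul, abs_two, abs_of_nonneg hθ']
    gcongr
  calc |gaussianInterpolantDeriv θ L α s x|
      = |-(2 * (2 * θ - 1) * s) + 2 * α * x + 2 * s * x ^ 2| *
        (θ * (L - (2 * θ - 1) * s ^ 2 + (α + s * x) ^ 2) ^ (θ - 1)) := by
        rw [gaussianInterpolantDeriv, abs_mul, abs_of_nonneg (a := θ * _) (by positivity)]
    _ ≤ (2 * (2 * θ - 1) * (1 + L) + 2 * |α| + 2 * (1 + L)) * (1 + x ^ 2) *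
        (θ * ((3 * L + 2 * α ^ 2) * (1 + x ^ 2)) ^ (θ - 1)) := by
        gcongr
        · exact (abs_quadratic_le _ _ _ _).trans (by gcongr)
        · refine (add_sq_affine_le (L := L) ?_ hL hs_sq).trans_eq (by ring)
          nlinarith [sq_nonneg s]
    _ = _ := by
        rw [Real.mul_rpow (by positivity) (by positivity), Real.rpow_sub_one (x := 1 + x ^ 2)
          (by positivity)]
        field_simp

lemma integrable_gaussianInterpolant (hθ : 0 ≤ θ) (hs : (2 * θ - 1) * s ^ 2 < L) :
    Integrable (gaussianInterpolant θ L α s) (gaussianReal 0 1) :=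
  integrable_add_sq_rpow_gaussianReal 0 1 (sub_pos.2 hs) hθ α s

lemma hasDerivAt_integral_gaussianInterpolant (hθ : 1 ≤ θ) (hs : (2 * θ - 1) * s ^ 2 < L) :
    HasDerivAt (fun s => ∫ x, gaussianInterpolant θ L α s x ∂gaussianReal 0 1)
      (∫ x, gaussianInterpolantDeriv θ L α s x ∂gaussianReal 0 1) s := by
  have hopen : IsOpen {s : ℝ | (2 * θ - 1) * s ^ 2 < L} :=
    isOpen_lt (by fun_prop) continuous_const
  refine (hasDerivAt_integral_of_dominated_loc_of_deriv_le (F := gaussianInterpolant θ L α)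
    (F' := gaussianInterpolantDeriv θ L α) (hopen.mem_nhds hs)
    (Eventually.of_forall fun s => Measurable.aestronglyMeasurable ?_)
    (integrable_gaussianInterpolant (by linarith) hs) (Measurable.aestronglyMeasurable ?_)
    (Eventually.of_forall fun x s hs => abs_gaussianInterpolantDeriv_le hθ hs)
    ((integrable_one_add_sq_rpow_gaussianReal 0 1 θ).const_mul _)
    (Eventually.of_forall fun x s hs => hasDerivAt_gaussianInterpolant hs)).2
  · unfold gaussianInterpolant
    fun_prop
  · unfold gaussianInterpolantDeriv
    fun_prop

lemma integral_gaussianInterpolantDeriv_nonpos (hθ : 1 ≤ θ) (hs0 : 0 ≤ s)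
    (hs : (2 * θ - 1) * s ^ 2 < L) :
    ∫ x, gaussianInterpolantDeriv θ L α s x ∂gaussianReal 0 1 ≤ 0 := by
  have hκ : 0 < L - (2 * θ - 1) * s ^ 2 := sub_pos.2 hs
  have hr : 0 ≤ θ - 1 := sub_nonneg.2 hθ
  have hstein := integral_mul_affine_mul_rpow_gaussianReal_le (α := α) hκ hr hs0
  have hsplit : ∫ x, gaussianInterpolantDeriv θ L α s x ∂gaussianReal 0 1
      = 2 * θ * (∫ x, x * ((α + s * x) *
          (L - (2 * θ - 1) * s ^ 2 + (α + s * x) ^ 2) ^ (θ - 1)) ∂gaussianReal 0 1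
        - s * (2 * (θ - 1) + 1) *
          ∫ x, (L - (2 * θ - 1) * s ^ 2 + (α + s * x) ^ 2) ^ (θ - 1) ∂gaussianReal 0 1) := by
    rw [← integral_const_mul, ← integral_sub, ← integral_const_mul]
    · congr 1 with x
      rw [gaussianInterpolantDeriv]
      ring
    · exact (integrable_quadratic_mul_add_sq_rpow_gaussianReal 0 1 hκ hr α s 0 α s).congr
        (Eventually.of_forall fun x => by ring_nf)
    · exact (integrable_add_sq_rpow_gaussianReal 0 1 hκ hr α s).const_mul _
  rw [hsplit]
  exact mul_nonpos_of_nonneg_of_nonpos (by linarith) (sub_nonpos.2 hstein)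

lemma antitoneOn_integral_gaussianInterpolant {β : ℝ} (hθ : 1 ≤ θ)
    (hβ : (2 * θ - 1) * β ^ 2 < L) :
    AntitoneOn (fun s => ∫ x, gaussianInterpolant θ L α s x ∂gaussianReal 0 1) (Icc 0 β) := by
  have hlt {s : ℝ} (hs : s ∈ Icc 0 β) : (2 * θ - 1) * s ^ 2 < L := by
    refine lt_of_le_of_lt ?_ hβ
    have := hs.1
    gcongr
    · linarith
    · exact hs.2
  exact antitoneOn_of_hasDerivWithinAt_nonpos (convex_Icc 0 β)
    (fun s hs =>
      (hasDerivAt_integral_gaussianInterpolant hθ (hlt hs)).continuousAt.continuousWithinAt)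
    (fun s hs => (hasDerivAt_integral_gaussianInterpolant hθ
      (hlt (interior_subset hs))).hasDerivWithinAt)
    (fun s hs => integral_gaussianInterpolantDeriv_nonpos hθ (interior_subset hs).1
      (hlt (interior_subset hs)))

lemma integral_add_sq_rpow_gaussianReal_le {K α β : ℝ} (hθ : 1 ≤ θ) (hK : 0 < K) (hβ : 0 ≤ β) :
    ∫ x, (K + (α + β * x) ^ 2) ^ θ ∂gaussianReal 0 1
      ≤ (K + α ^ 2 + (2 * θ - 1) * β ^ 2) ^ θ := by
  have hanti := antitoneOn_integral_gaussianInterpolant (L := K + (2 * θ - 1) * β ^ 2) (α := α)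
    hθ (by linarith) (left_mem_Icc.2 hβ) (right_mem_Icc.2 hβ) hβ
  simpa [gaussianInterpolant, add_right_comm] using hanti

variable {E F : Type*} [NormedAddCommGroup E] [InnerProductSpace ℝ E]
  [NormedAddCommGroup F] [InnerProductSpace ℝ F] {K : ℝ}

lemma exists_norm_sq_add_smul_eq (y a : F) :
    ∃ α κ : ℝ, 0 ≤ κ ∧ κ + α ^ 2 = ‖y‖ ^ 2 ∧
      ∀ x : ℝ, ‖y + x • a‖ ^ 2 = κ + (α + ‖a‖ * x) ^ 2 := by
  rcases eq_or_ne a 0 with rfl | ha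
  · exact ⟨0, ‖y‖ ^ 2, by positivity, by ring, fun x => by simp⟩
  obtain ⟨α, hα⟩ : ∃ α, α * ‖a‖ = ⟪y, a⟫ := ⟨_, div_mul_cancel₀ _ (norm_ne_zero_iff.2 ha)⟩
  refine ⟨α, ‖y‖ ^ 2 - α ^ 2, sub_nonneg.2 (sq_le_sq.2 ?_), by ring, fun x => ?_⟩
  · refine le_of_mul_le_mul_right ?_ (norm_pos_iff.2 ha)
    rw [← abs_norm a, ← abs_mul, abs_norm, abs_norm, hα]
    exact abs_real_inner_le_norm y a
  · rw [norm_add_sq_real, inner_smul_right, norm_smul, mul_pow, Real.norm_eq_abs, sq_abs, ← hα]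
    ring

lemma lintegral_add_norm_sq_rpow_gaussianReal_le (hθ : 1 ≤ θ) (hK : 0 < K) (y a : F) :
    ∫⁻ x, ENNReal.ofReal ((K + ‖y + x • a‖ ^ 2) ^ θ) ∂gaussianReal 0 1
      ≤ ENNReal.ofReal ((K + ‖y‖ ^ 2 + (2 * θ - 1) * ‖a‖ ^ 2) ^ θ) := by
  obtain ⟨α, κ, hκ, hy, hnorm⟩ := exists_norm_sq_add_smul_eq y a
  have hpos : 0 < K + κ := by positivity
  simp only [hnorm, ← hy, ← add_assoc]
  rw [← ofReal_integral_eq_lintegral_ofReal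
    (integrable_add_sq_rpow_gaussianReal 0 1 hpos (by linarith) α ‖a‖)
    (Eventually.of_forall fun x => by positivity)]
  exact ENNReal.ofReal_le_ofReal (integral_add_sq_rpow_gaussianReal_le hθ hpos (norm_nonneg a))

lemma lintegral_add_norm_sq_rpow_pi_gaussianReal_le (hθ : 1 ≤ θ) :
    ∀ (m : ℕ) {K : ℝ}, 0 < K → ∀ (y : F) (a : Fin m → F),
    ∫⁻ x, ENNReal.ofReal ((K + ‖y + ∑ j, x j • a j‖ ^ 2) ^ θ)
        ∂Measure.pi (fun _ : Fin m => gaussianReal 0 1)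
      ≤ ENNReal.ofReal ((K + ‖y‖ ^ 2 + (2 * θ - 1) * ∑ j, ‖a j‖ ^ 2) ^ θ)
  | 0, K, _, y, a => by simp
  | m + 1, K, hK, y, a => by
    have hθ0 : 0 ≤ θ := by linarith
    have hsum : 0 ≤ (2 * θ - 1) * ∑ j : Fin m, ‖a j.succ‖ ^ 2 :=
      mul_nonneg (by linarith) (by positivity)
    have hmeas : Measurable fun x : Fin (m + 1) → ℝ =>
        ENNReal.ofReal ((K + ‖y + ∑ j, x j • a j‖ ^ 2) ^ θ) :=
      (Continuous.measurable (by fun_prop (disch := assumption))).ennreal_ofReal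
    have hsplit := (measurePreserving_piFinSuccAbove
      (fun _ : Fin (m + 1) => gaussianReal 0 1) 0).symm
    rw [← hsplit.lintegral_comp_emb (MeasurableEquiv.measurableEmbedding _),
      lintegral_prod _ (by exact (hmeas.comp (MeasurableEquiv.measurable _)).aemeasurable)]
    calc ∫⁻ u, ∫⁻ x, ENNReal.ofReal ((K + ‖y + ∑ j, ((MeasurableEquiv.piFinSuccAbove
            (fun _ : Fin (m + 1) => ℝ) 0).symm (u, x)) j • a j‖ ^ 2) ^ θ)
          ∂Measure.pi (fun _ : Fin m => gaussianReal 0 1) ∂gaussianReal 0 1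
        = ∫⁻ u, ∫⁻ x, ENNReal.ofReal ((K + ‖(y + u • a 0) + ∑ j, x j • a j.succ‖ ^ 2) ^ θ)
          ∂Measure.pi (fun _ : Fin m => gaussianReal 0 1) ∂gaussianReal 0 1 := by
          simp [Fin.sum_univ_succ, MeasurableEquiv.piFinSuccAbove, add_assoc]
      _ ≤ ∫⁻ u, ENNReal.ofReal (((K + (2 * θ - 1) * ∑ j : Fin m, ‖a j.succ‖ ^ 2) +
            ‖y + u • a 0‖ ^ 2) ^ θ) ∂gaussianReal 0 1 := by
          refine lintegral_mono fun u => ?_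
          rw [add_right_comm]
          exact lintegral_add_norm_sq_rpow_pi_gaussianReal_le hθ m hK _ _
      _ ≤ _ := by
          refine (lintegral_add_norm_sq_rpow_gaussianReal_le hθ (by positivity) y (a 0)).trans_eq ?_
          rw [Fin.sum_univ_succ]
          congr 2
          ring

variable [FiniteDimensional ℝ E] [MeasurableSpace E] [BorelSpace E]

lemma eq_map_smul_stdGaussian {h : ℝ} (hh : 0 ≤ h) {μ : Measure E} [IsFiniteMeasure μ]
    (hμ : ∀ l : E, μ.map (fun w => ⟪l, w⟫) = gaussianReal 0 (h * ‖l‖ ^ 2).toNNReal) :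
    μ = (stdGaussian E).map (fun w => √h • w) := by
  refine Measure.ext_of_charFun (funext fun t => ?_)
  have hproj : charFun μ t = charFun (μ.map fun w => ⟪t, w⟫) 1 := by
    rw [charFun_apply, charFun_apply, integral_map (by fun_prop) (by fun_prop)]
    simp [real_inner_comm]
  have hnorm : ‖√h • t‖ ^ 2 = h * ‖t‖ ^ 2 := by
    rw [norm_smul, mul_pow, Real.norm_eq_abs, sq_abs, Real.sq_sqrt hh]
  rw [hproj, hμ, charFun_gaussianReal, charFun_map_smul, charFun_stdGaussian,
    ← Complex.ofReal_pow ‖√h • t‖, hnorm, Real.coe_toNNReal _ (by positivity)]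
  congr 1
  push_cast
  ring

lemma lintegral_add_norm_sq_rpow_isotropic_le (hθ : 1 ≤ θ) (hK : 0 < K) {h : ℝ} (hh : 0 ≤ h)
    {μ : Measure E} [IsFiniteMeasure μ]
    (hμ : ∀ l : E, μ.map (fun w => ⟪l, w⟫) = gaussianReal 0 (h * ‖l‖ ^ 2).toNNReal)
    {m : ℕ} (e : OrthonormalBasis (Fin m) ℝ E) (A : E →ₗ[ℝ] F) (y : F) :
    ∫⁻ w, ENNReal.ofReal ((K + ‖y + A w‖ ^ 2) ^ θ) ∂μ
      ≤ ENNReal.ofReal ((K + ‖y‖ ^ 2 + (2 * θ - 1) * (h * ∑ j, ‖A (e j)‖ ^ 2)) ^ θ) := by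
  have hθ0 : 0 ≤ θ := by linarith
  have hA : Continuous A := A.continuous_of_finiteDimensional
  have hmeas : Measurable fun w => ENNReal.ofReal ((K + ‖y + A w‖ ^ 2) ^ θ) :=
    (Continuous.measurable (by fun_prop (disch := assumption))).ennreal_ofReal
  rw [eq_map_smul_stdGaussian hh hμ, stdGaussian_eq_map_pi_orthonormalBasis e,
    Measure.map_map (by fun_prop) (by fun_prop), lintegral_map hmeas (by fun_prop)]
  have hpi := lintegral_add_norm_sq_rpow_pi_gaussianReal_le hθ m hK y (fun j => √h • A (e j))
  simpa only [Function.comp_apply, map_smul, map_sum, Finset.smul_sum, smul_comm (√h), norm_smul,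
    mul_pow, Real.norm_eq_abs, sq_abs, Real.sq_sqrt hh, ← Finset.mul_sum] using hpi

end Gaussian

section MatMulVec

variable {d m : ℕ}

lemma matMulVec_eq_toEuclideanLin (A : Matrix (Fin d) (Fin m) ℝ) :
    matMulVec A = A.toEuclideanLin := rfl

lemma sum_norm_sq_toEuclideanLin_basisFun (A : Matrix (Fin d) (Fin m) ℝ) :
    ∑ j, ‖A.toEuclideanLin (EuclideanSpace.basisFun (Fin m) ℝ j)‖ ^ 2 = ‖A‖ ^ 2 := by
  rw [Matrix.frobenius_norm_def, ← Real.sqrt_eq_rpow, Real.sq_sqrt (by positivity),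
    Finset.sum_comm]
  simp [EuclideanSpace.norm_sq_eq]

lemma lintegral_add_norm_sq_matMulVec_rpow_le {K θ h : ℝ} (hθ : 1 ≤ θ) (hK : 0 < K) (hh : 0 ≤ h)
    {μ : Measure (EuclideanSpace ℝ (Fin m))} [IsFiniteMeasure μ]
    (hμ : ∀ l : EuclideanSpace ℝ (Fin m),
      μ.map (fun w => ⟪l, w⟫) = gaussianReal 0 (h * ‖l‖ ^ 2).toNNReal)
    (A : Matrix (Fin d) (Fin m) ℝ) (y : EuclideanSpace ℝ (Fin d)) :
    ∫⁻ w, ENNReal.ofReal ((K + ‖y + matMulVec A w‖ ^ 2) ^ θ) ∂μ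
      ≤ ENNReal.ofReal ((K + ‖y‖ ^ 2 + (2 * θ - 1) * (h * ‖A‖ ^ 2)) ^ θ) := by
  rw [← sum_norm_sq_toEuclideanLin_basisFun, matMulVec_eq_toEuclideanLin]
  exact lintegral_add_norm_sq_rpow_isotropic_le hθ hK hh hμ _ _ y

lemma measurable_add_matMulVec {σ : EuclideanSpace ℝ (Fin d) → Matrix (Fin d) (Fin m) ℝ}
    (hσ : ∀ i j, Measurable fun x => σ x i j) :
    Measurable fun z : EuclideanSpace ℝ (Fin d) × EuclideanSpace ℝ (Fin m) =>
      z.1 + matMulVec (σ z.1) z.2 := by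
  refine measurable_fst.add ((WithLp.measurable_toLp 2 _).comp (measurable_pi_lambda _ fun i => ?_))
  simp only [Matrix.mulVec, dotProduct]
  fun_prop

end MatMulVec

section Moments

variable {Ω : Type*} [MeasurableSpace Ω] {P : Measure Ω}

lemma lintegral_ofReal_rpow_le_of_exponent_le [IsProbabilityMeasure P] {f : Ω → ℝ} {B θ q : ℝ}
    (hf : AEStronglyMeasurable f P) (hf0 : ∀ ω, 0 ≤ f ω) (hB : 0 ≤ B) (hq : 0 ≤ q) (hqθ : q ≤ θ)
    (hθ : ∫⁻ ω, ENNReal.ofReal (f ω ^ θ) ∂P ≤ ENNReal.ofReal (B ^ θ)) :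
    ∫⁻ ω, ENNReal.ofReal (f ω ^ q) ∂P ≤ ENNReal.ofReal (B ^ q) := by
  rcases hq.eq_or_lt with rfl | hq0
  · simp
  have hθ0 : 0 < θ := hq0.trans_le hqθ
  have hnorm {r : ℝ} (hr : 0 < r) :
      eLpNorm' f r P = (∫⁻ ω, ENNReal.ofReal (f ω ^ r) ∂P) ^ (1 / r) := by
    simp only [eLpNorm', Real.enorm_eq_ofReal (hf0 _), ENNReal.ofReal_rpow_of_nonneg (hf0 _) hr.le]
  have hle : (∫⁻ ω, ENNReal.ofReal (f ω ^ q) ∂P) ^ (1 / q) ≤ ENNReal.ofReal B :=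
    calc (∫⁻ ω, ENNReal.ofReal (f ω ^ q) ∂P) ^ (1 / q) ≤ eLpNorm' f θ P := by
          rw [← hnorm hq0]
          exact eLpNorm'_le_eLpNorm'_of_exponent_le hq0 hqθ P hf
      _ ≤ ENNReal.ofReal (B ^ θ) ^ (1 / θ) := by
          rw [hnorm hθ0]
          gcongr
      _ = ENNReal.ofReal B := by
          rw [← ENNReal.ofReal_rpow_of_nonneg hB hθ0.le, one_div, ENNReal.rpow_rpow_inv hθ0.ne']
  rwa [one_div, ENNReal.rpow_inv_le_iff hq0, ENNReal.ofReal_rpow_of_nonneg hB hq] at hle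

lemma lintegral_ofReal_rpow_le_mul {f g : Ω → ℝ} {C q : ℝ} (hC : 0 ≤ C) (hq : 0 ≤ q)
    (hf : ∀ ω, 0 ≤ f ω) (hfg : ∀ ω, f ω ≤ C * g ω) (hg : ∀ ω, 0 ≤ g ω) :
    ∫⁻ ω, ENNReal.ofReal (f ω ^ q) ∂P
      ≤ ENNReal.ofReal (C ^ q) * ∫⁻ ω, ENNReal.ofReal (g ω ^ q) ∂P := by
  rw [← lintegral_const_mul' _ _ ENNReal.ofReal_ne_top]
  refine lintegral_mono fun ω => ?_
  rw [← ENNReal.ofReal_mul (by positivity), ← Real.mul_rpow hC (hg ω)]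
  exact ENNReal.ofReal_le_ofReal (Real.rpow_le_rpow (hf ω) (hfg ω) hq)

lemma lintegral_comp_prodMk_of_indepFun [IsFiniteMeasure P] {α β : Type*} [MeasurableSpace α]
    [MeasurableSpace β] {y : Ω → α} {w : Ω → β} (hyw : IndepFun y w P) (hy : Measurable y)
    (hw : Measurable w) {g : α × β → ℝ≥0∞} (hg : Measurable g) :
    ∫⁻ ω, g (y ω, w ω) ∂P = ∫⁻ ω, ∫⁻ v, g (y ω, v) ∂P.map w ∂P := by
  rw [← lintegral_map hg (hy.prodMk hw),
    hyw.map_prod_eq_prod_map_map hy.aemeasurable hw.aemeasurable,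
    lintegral_prod _ hg.aemeasurable, lintegral_map hg.lintegral_prod_right' hy]

lemma one_add_sq_rpow_le {t q p : ℝ} (ht : 0 ≤ t) (hq : 0 ≤ q) (hqp : 2 * q ≤ p) :
    (1 + t ^ 2) ^ q ≤ 2 ^ q * (1 + t ^ p) := by
  have htp : 0 ≤ t ^ p := Real.rpow_nonneg ht p
  rcases le_total t 1 with ht1 | ht1
  · calc (1 + t ^ 2) ^ q ≤ 2 ^ q := Real.rpow_le_rpow (by positivity) (by nlinarith) hq
      _ ≤ 2 ^ q * (1 + t ^ p) := le_mul_of_one_le_right (by positivity) (by linarith)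
  · calc (1 + t ^ 2) ^ q ≤ (2 * t ^ 2) ^ q := Real.rpow_le_rpow (by positivity) (by nlinarith) hq
      _ = 2 ^ q * t ^ (2 * q) := by
        rw [Real.mul_rpow zero_le_two (by positivity), ← Real.rpow_natCast_mul ht]
        norm_cast
      _ ≤ 2 ^ q * (1 + t ^ p) := by
        gcongr
        linarith [Real.rpow_le_rpow_of_exponent_le ht1 hqp]

lemma lintegral_one_add_sq_rpow_lt_top [IsFiniteMeasure P] {f : Ω → ℝ} {q p : ℝ}
    (hf : ∀ ω, 0 ≤ f ω) (hq : 0 ≤ q) (hqp : 2 * q ≤ p)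
    (hfp : ∫⁻ ω, ENNReal.ofReal (f ω ^ p) ∂P < ∞) :
    ∫⁻ ω, ENNReal.ofReal ((1 + f ω ^ 2) ^ q) ∂P < ∞ := by
  calc ∫⁻ ω, ENNReal.ofReal ((1 + f ω ^ 2) ^ q) ∂P
      ≤ ∫⁻ ω, ENNReal.ofReal (2 ^ q) * (1 + ENNReal.ofReal (f ω ^ p)) ∂P := by
        refine lintegral_mono fun ω => ?_
        rw [← ENNReal.ofReal_one, ← ENNReal.ofReal_add zero_le_one (Real.rpow_nonneg (hf ω) p),
          ← ENNReal.ofReal_mul (by positivity)]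
        exact ENNReal.ofReal_le_ofReal (one_add_sq_rpow_le (hf ω) hq hqp)
    _ = ENNReal.ofReal (2 ^ q) * (P univ + ∫⁻ ω, ENNReal.ofReal (f ω ^ p) ∂P) := by
        rw [lintegral_const_mul' _ _ ENNReal.ofReal_ne_top, lintegral_add_left (by fun_prop),
          lintegral_one]
    _ < ∞ := ENNReal.mul_lt_top ENNReal.ofReal_lt_top
        (ENNReal.add_lt_top.2 ⟨measure_lt_top P univ, hfp⟩)

lemma add_rpow_le_two_rpow_mul {a b q : ℝ} (ha : 0 ≤ a) (hb : 0 ≤ b) (hq : 0 ≤ q) :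
    (a + b) ^ q ≤ 2 ^ q * (a ^ q + b ^ q) := by
  calc (a + b) ^ q ≤ (2 * max a b) ^ q :=
        Real.rpow_le_rpow (by positivity) (by linarith [le_max_left a b, le_max_right a b]) hq
    _ = 2 ^ q * max a b ^ q := Real.mul_rpow zero_le_two (by positivity)
    _ ≤ 2 ^ q * (a ^ q + b ^ q) := by
        gcongr
        rcases max_choice a b with hmax | hmax <;> rw [hmax] <;>
          linarith [Real.rpow_nonneg ha q, Real.rpow_nonneg hb q]

lemma one_add_norm_sub_smul_sq_rpow_le {E : Type*} [SeminormedAddCommGroup E] [NormedSpace ℝ E]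
    {h q : ℝ} (hh : |h| ≤ 1) (hq : 0 ≤ q) (x v : E) :
    (1 + ‖x - h • v‖ ^ 2) ^ q ≤ 4 ^ q * ((1 + ‖x‖ ^ 2) ^ q + (1 + ‖v‖ ^ 2) ^ q) := by
  have hsub : ‖x - h • v‖ ≤ ‖x‖ + ‖v‖ := by
    refine (norm_sub_le _ _).trans (add_le_add_right ?_ _)
    rw [norm_smul, Real.norm_eq_abs]
    exact mul_le_of_le_one_left (norm_nonneg v) hh
  have hsq : 1 + ‖x - h • v‖ ^ 2 ≤ 2 * ((1 + ‖x‖ ^ 2) + (1 + ‖v‖ ^ 2)) := by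
    nlinarith [pow_le_pow_left₀ (norm_nonneg _) hsub 2, sq_nonneg (‖x‖ - ‖v‖)]
  calc (1 + ‖x - h • v‖ ^ 2) ^ q ≤ (2 * ((1 + ‖x‖ ^ 2) + (1 + ‖v‖ ^ 2))) ^ q :=
        Real.rpow_le_rpow (by positivity) hsq hq
    _ ≤ 2 ^ q * (2 ^ q * ((1 + ‖x‖ ^ 2) ^ q + (1 + ‖v‖ ^ 2) ^ q)) := by
        rw [Real.mul_rpow zero_le_two (by positivity)]
        gcongr
        exact add_rpow_le_two_rpow_mul (by positivity) (by positivity) hq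
    _ = _ := by
        rw [← mul_assoc, ← Real.mul_rpow zero_le_two zero_le_two]
        norm_num

lemma tendsto_lintegral_one_add_norm_sub_smul_sq_rpow {E : Type*} [SeminormedAddCommGroup E]
    [NormedSpace ℝ E] [MeasurableSpace E] [BorelSpace E] [SecondCountableTopology E]
    {f g : Ω → E} {q : ℝ} (hf : Measurable f) (hg : Measurable g) (hq : 0 ≤ q)
    (hfq : ∫⁻ ω, ENNReal.ofReal ((1 + ‖f ω‖ ^ 2) ^ q) ∂P ≠ ∞)
    (hgq : ∫⁻ ω, ENNReal.ofReal ((1 + ‖g ω‖ ^ 2) ^ q) ∂P ≠ ∞) :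
    Tendsto (fun h : ℝ => ∫⁻ ω, ENNReal.ofReal ((1 + ‖f ω - h • g ω‖ ^ 2) ^ q) ∂P) (nhds 0)
      (nhds (∫⁻ ω, ENNReal.ofReal ((1 + ‖f ω‖ ^ 2) ^ q) ∂P)) := by
  refine tendsto_lintegral_filter_of_dominated_convergence
    (fun ω => ENNReal.ofReal (4 ^ q) * (ENNReal.ofReal ((1 + ‖f ω‖ ^ 2) ^ q)
      + ENNReal.ofReal ((1 + ‖g ω‖ ^ 2) ^ q)))
    (Eventually.of_forall fun h => by fun_prop) ?_ ?_ (Eventually.of_forall fun ω => ?_)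
  · filter_upwards [Metric.closedBall_mem_nhds (0 : ℝ) one_pos] with h hh
    refine Eventually.of_forall fun ω => ?_
    rw [← ENNReal.ofReal_add (by positivity) (by positivity), ← ENNReal.ofReal_mul (by positivity)]
    exact ENNReal.ofReal_le_ofReal
      (one_add_norm_sub_smul_sq_rpow_le (by simpa using hh) hq (f ω) (g ω))
  · rw [lintegral_const_mul' _ _ ENNReal.ofReal_ne_top, lintegral_add_left (by fun_prop)]
    exact ENNReal.mul_ne_top ENNReal.ofReal_ne_top (ENNReal.add_ne_top.2 ⟨hfq, hgq⟩)
  · have hcont : Continuous fun h : ℝ => (1 + ‖f ω - h • g ω‖ ^ 2) ^ q :=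
      Continuous.rpow_const (by fun_prop) fun _ => Or.inr hq
    simpa [Function.comp_def] using (ENNReal.continuous_ofReal.comp hcont).tendsto 0

end Moments

section Resolvent

variable {E : Type*} [NormedAddCommGroup E] [InnerProductSpace ℝ E] {b : E → E} {O : Set E}
  {c h T : ℝ}

/-- The one-sided Lipschitz condition on the drift `b` over the set `O`, with constant `c`. -/
def OneSidedLipschitzOn (c : ℝ) (b : E → E) (O : Set E) : Prop :=
  ∀ x ∈ O, ∀ y ∈ O, ⟪x - y, b x - b y⟫ ≤ c * ‖x - y‖ ^ 2

/-- The inverse of `x ↦ x - h • b x` on `O`, which turns the implicit Euler equation into a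
recursion. It is meaningful only where that map is surjective from `O`. -/
def driftResolvent (b : E → E) (O : Set E) (h : ℝ) : E → E :=
  Function.invFunOn (fun x => x - h • b x) O

lemma OneSidedLipschitzOn.mul_norm_sub_le (hb : OneSidedLipschitzOn c b O) (hh : 0 ≤ h) {x y : E}
    (hx : x ∈ O) (hy : y ∈ O) :
    (1 - h * c) * ‖x - y‖ ≤ ‖(x - h • b x) - (y - h • b y)‖ := by
  rcases (norm_nonneg (x - y)).eq_or_lt with hxy | hxy
  · simp [← hxy]
  refine le_of_mul_le_mul_left ?_ hxy
  calc ‖x - y‖ * ((1 - h * c) * ‖x - y‖)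
      = ‖x - y‖ ^ 2 - h * (c * ‖x - y‖ ^ 2) := by ring
    _ ≤ ‖x - y‖ ^ 2 - h * ⟪x - y, b x - b y⟫ := by
        gcongr
        exact hb x hx y hy
    _ = ⟪x - y, (x - h • b x) - (y - h • b y)⟫ := by
        rw [sub_sub_sub_comm, ← smul_sub, inner_sub_right (x - y) (x - y),
          real_inner_self_eq_norm_sq, inner_smul_right]
    _ ≤ ‖x - y‖ * ‖(x - h • b x) - (y - h • b y)‖ := real_inner_le_norm _ _

lemma OneSidedLipschitzOn.injOn_sub_smul (hb : OneSidedLipschitzOn c b O) (hh : 0 ≤ h)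
    (hhc : h * c < 1) : InjOn (fun x => x - h • b x) O := by
  intro x hx y hy hxy
  have hle := hb.mul_norm_sub_le hh hx hy
  rw [sub_eq_zero.2 hxy, norm_zero] at hle
  exact sub_eq_zero.1 (norm_le_zero_iff.1 (nonpos_of_mul_nonpos_right hle (sub_pos.2 hhc)))

lemma driftResolvent_mem (hsurj : SurjOn (fun x => x - h • b x) O univ) (z : E) :
    driftResolvent b O h z ∈ O :=
  Function.invFunOn_mem (hsurj (mem_univ z))

lemma driftResolvent_sub_smul (hsurj : SurjOn (fun x => x - h • b x) O univ) (z : E) :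
    driftResolvent b O h z - h • b (driftResolvent b O h z) = z :=
  Function.invFunOn_eq (hsurj (mem_univ z))

lemma OneSidedLipschitzOn.continuous_driftResolvent (hb : OneSidedLipschitzOn c b O) (hh : 0 ≤ h)
    (hhc : h * c < 1) (hsurj : SurjOn (fun x => x - h • b x) O univ) :
    Continuous (driftResolvent b O h) := by
  refine (LipschitzWith.of_dist_le' (K := (1 - h * c)⁻¹) fun z z' => ?_).continuous
  rw [inv_mul_eq_div, le_div_iff₀' (sub_pos.2 hhc), dist_eq_norm, dist_eq_norm]
  simpa only [driftResolvent_sub_smul hsurj] using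
    hb.mul_norm_sub_le hh (driftResolvent_mem hsurj z) (driftResolvent_mem hsurj z')

lemma norm_sq_add_le_norm_sub_smul_sq {x v : E} {s k : ℝ} (hh : 0 ≤ h) (hle : ⟪x, v⟫ + s ≤ k) :
    ‖x‖ ^ 2 + 2 * h * s ≤ ‖x - h • v‖ ^ 2 + 2 * h * k := by
  rw [norm_sub_sq_real, inner_smul_right]
  nlinarith [mul_le_mul_of_nonneg_left hle hh, sq_nonneg ‖h • v‖]

lemma one_add_norm_sq_le_inv_mul {x v : E} {k : ℝ} (hh : 0 ≤ h) (hhk : 2 * k * h < 1)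
    (hle : ⟪x, v⟫ ≤ k * (1 + ‖x‖ ^ 2)) :
    1 + ‖x‖ ^ 2 ≤ (1 - 2 * k * h)⁻¹ * (1 + ‖x - h • v‖ ^ 2) := by
  rw [inv_mul_eq_div, le_div_iff₀ (sub_pos.2 hhk)]
  linarith [norm_sq_add_le_norm_sub_smul_sq (s := 0) hh (by simpa using hle)]

lemma OneSidedLipschitzOn.one_add_norm_sq_le (hb : OneSidedLipschitzOn c b O) (hh : 0 ≤ h)
    (hhT : h ≤ T) (hhc : h * (4 * c) ≤ 1) {x y : E} (hx : x ∈ O) (hy : y ∈ O) :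
    1 + ‖x‖ ^ 2 ≤ (8 + 18 * (‖y‖ + T * ‖b y‖) ^ 2) * (1 + ‖x - h • b x‖ ^ 2) := by
  set r := ‖y‖ + T * ‖b y‖ with hr
  set z := ‖x - h • b x‖
  have hyr : ‖y - h • b y‖ ≤ r := by
    refine (norm_sub_le _ _).trans ?_
    rw [norm_smul, Real.norm_of_nonneg hh, hr]
    gcongr
  have hsub : 3 / 4 * ‖x - y‖ ≤ z + r :=
    calc 3 / 4 * ‖x - y‖ ≤ (1 - h * c) * ‖x - y‖ := by
          gcongr
          linarith
      _ ≤ ‖(x - h • b x) - (y - h • b y)‖ := hb.mul_norm_sub_le hh hx hy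
      _ ≤ z + r := (norm_sub_le _ _).trans (by gcongr)
  have hnorm_y : ‖y‖ ≤ r := by
    have : 0 ≤ T * ‖b y‖ := mul_nonneg (hh.trans hhT) (norm_nonneg _)
    linarith
  have hnorm_x : ‖x‖ ≤ 2 * z + 3 * r := by
    have : ‖x‖ ≤ ‖x - y‖ + ‖y‖ := by simpa using norm_add_le (x - y) y
    linarith [norm_nonneg (x - h • b x), norm_nonneg y]
  have hsq : ‖x‖ ^ 2 ≤ (2 * z + 3 * r) ^ 2 := by gcongr
  nlinarith [sq_nonneg (2 * z - 3 * r), mul_nonneg (sq_nonneg r) (sq_nonneg z)]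

end Resolvent

section ImplicitEuler

variable {Ω : Type*} {d m : ℕ} {c ct T p h q C : ℝ} {O : Set (EuclideanSpace ℝ (Fin d))}
  {b : EuclideanSpace ℝ (Fin d) → EuclideanSpace ℝ (Fin d)}
  {σ : EuclideanSpace ℝ (Fin d) → Matrix (Fin d) (Fin m) ℝ}
  {ξ : Ω → EuclideanSpace ℝ (Fin d)} {W : ℝ → Ω → EuclideanSpace ℝ (Fin m)}

/-- The drift-implicit Euler approximation with step size `h`, each step being solved by
`driftResolvent`. -/
def implicitEuler (O : Set (EuclideanSpace ℝ (Fin d)))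
    (b : EuclideanSpace ℝ (Fin d) → EuclideanSpace ℝ (Fin d))
    (σ : EuclideanSpace ℝ (Fin d) → Matrix (Fin d) (Fin m) ℝ)
    (ξ : Ω → EuclideanSpace ℝ (Fin d)) (W : ℝ → Ω → EuclideanSpace ℝ (Fin m)) (h : ℝ) :
    ℕ → Ω → EuclideanSpace ℝ (Fin d)
  | 0, ω => ξ ω
  | n + 1, ω => driftResolvent b O h (implicitEuler O b σ ξ W h n ω +
      matMulVec (σ (implicitEuler O b σ ξ W h n ω)) (W ((n + 1 : ℕ) * h) ω - W (n * h) ω))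

lemma implicitEuler_mem (hξ : ∀ ω, ξ ω ∈ O) (hsurj : SurjOn (fun x => x - h • b x) O univ)
    (n : ℕ) (ω : Ω) : implicitEuler O b σ ξ W h n ω ∈ O := by
  cases n with
  | zero => exact hξ ω
  | succ n => exact driftResolvent_mem hsurj _

lemma implicitEuler_succ_sub_smul (hsurj : SurjOn (fun x => x - h • b x) O univ) (n : ℕ) (ω : Ω) :
    implicitEuler O b σ ξ W h (n + 1) ω - h • b (implicitEuler O b σ ξ W h (n + 1) ω)
      = implicitEuler O b σ ξ W h n ω + matMulVec (σ (implicitEuler O b σ ξ W h n ω))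
          (W ((n + 1 : ℕ) * h) ω - W (n * h) ω) :=
  driftResolvent_sub_smul hsurj _

lemma implicitEulerScheme_implicitEuler
    (hsurj : ∀ s : ℝ, 0 < s → s * c < 1 → SurjOn (fun x => x - s • b x) O univ) :
    ImplicitEulerScheme d m T c O b σ ξ W (implicitEuler O b σ ξ W) := by
  intro h hh hhc
  refine ⟨fun ω => rfl, fun n hn _ ω => ?_⟩
  obtain ⟨n, rfl⟩ := Nat.exists_eq_add_of_le' hn
  refine ⟨driftResolvent_mem (hsurj h hh.1 hhc) _, ?_⟩
  have hstep := implicitEuler_succ_sub_smul (σ := σ) (ξ := ξ) (W := W) (hsurj h hh.1 hhc) n ω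
  rw [sub_eq_iff_eq_add] at hstep
  rw [add_right_comm, Nat.add_sub_cancel]
  exact hstep

lemma ImplicitEulerScheme.eq_of_oneSidedLipschitzOn {Y Y' : ℝ → ℕ → Ω → EuclideanSpace ℝ (Fin d)}
    (hb : OneSidedLipschitzOn c b O) (hY : ImplicitEulerScheme d m T c O b σ ξ W Y)
    (hY' : ImplicitEulerScheme d m T c O b σ ξ W Y') (hh : h ∈ Ioc 0 T) (hhc : h * c < 1)
    {n : ℕ} (hn : (n : ℝ) ≤ T / h) (ω : Ω) : Y' h n ω = Y h n ω := by
  induction n with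
  | zero => rw [(hY h hh hhc).1, (hY' h hh hhc).1]
  | succ n ih =>
    have hprev : Y' h n ω = Y h n ω := ih (le_trans (by simp) hn)
    obtain ⟨hmem, heq⟩ := (hY h hh hhc).2 (n + 1) (by simp) hn ω
    obtain ⟨hmem', heq'⟩ := (hY' h hh hhc).2 (n + 1) (by simp) hn ω
    refine hb.injOn_sub_smul hh.1.le hhc hmem' hmem ?_
    rw [add_right_comm, ← sub_eq_iff_eq_add, Nat.add_sub_cancel] at heq heq'
    simp only [heq, heq', hprev]

variable [mΩ : MeasurableSpace Ω] {P : Measure Ω} {F : Filtration ℝ mΩ}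

/-- The properties of a standard Brownian motion on `[0, T]` with respect to the filtration `F`
that the scheme sees: `W` is adapted, and `W u - W s` is centred Gaussian with covariance
`(u - s) • 1` and independent of `F s`. The law is given through one-dimensional projections. -/
structure HasBrownianIncrements (P : Measure Ω) (F : Filtration ℝ mΩ) (T : ℝ)
    (W : ℝ → Ω → EuclideanSpace ℝ (Fin m)) : Prop where
  measurable : ∀ u ∈ Icc 0 T, Measurable[F u] (W u)
  map_inner_sub : ∀ s u : ℝ, 0 ≤ s → s ≤ u → u ≤ T → ∀ l : EuclideanSpace ℝ (Fin m),
    P.map (fun ω => ⟪l, W u ω - W s ω⟫) = gaussianReal 0 ((u - s) * ‖l‖ ^ 2).toNNReal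
  indep_sub : ∀ s u : ℝ, 0 ≤ s → s ≤ u → u ≤ T →
    Indep (MeasurableSpace.comap (fun ω => W u ω - W s ω) inferInstance) (F s) P

lemma HasBrownianIncrements.measurable_sub (hW : HasBrownianIncrements P F T W) {s u : ℝ}
    (hs : 0 ≤ s) (hsu : s ≤ u) (huT : u ≤ T) : Measurable[F u] fun ω => W u ω - W s ω :=
  (hW.measurable u ⟨hs.trans hsu, huT⟩).sub
    ((hW.measurable s ⟨hs, hsu.trans huT⟩).mono (F.mono hsu) le_rfl)

lemma HasBrownianIncrements.map_inner_map_sub (hW : HasBrownianIncrements P F T W) {s u : ℝ}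
    (hs : 0 ≤ s) (hsu : s ≤ u) (huT : u ≤ T) (l : EuclideanSpace ℝ (Fin m)) :
    (P.map fun ω => W u ω - W s ω).map (fun w => ⟪l, w⟫)
      = gaussianReal 0 ((u - s) * ‖l‖ ^ 2).toNNReal := by
  rw [Measure.map_map (by fun_prop) ((hW.measurable_sub hs hsu huT).mono (F.le u) le_rfl)]
  exact hW.map_inner_sub s u hs hsu huT l

lemma HasBrownianIncrements.lintegral_comp_sub [IsFiniteMeasure P]
    (hW : HasBrownianIncrements P F T W) {s u : ℝ} (hs : 0 ≤ s) (hsu : s ≤ u) (huT : u ≤ T)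
    {α : Type*} [MeasurableSpace α] {y : Ω → α} (hy : Measurable[F s] y)
    {g : α × EuclideanSpace ℝ (Fin m) → ℝ≥0∞} (hg : Measurable g) :
    ∫⁻ ω, g (y ω, W u ω - W s ω) ∂P
      = ∫⁻ ω, ∫⁻ w, g (y ω, w) ∂P.map (fun ω => W u ω - W s ω) ∂P :=
  lintegral_comp_prodMk_of_indepFun
    (indep_of_indep_of_le_right (hW.indep_sub s u hs hsu huT) hy.comap_le).symm
    (hy.mono (F.le s) le_rfl) ((hW.measurable_sub hs hsu huT).mono (F.le u) le_rfl) hg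

lemma HasBrownianIncrements.measurable_implicitEuler (hW : HasBrownianIncrements P F T W)
    (hσ : ∀ i j, Measurable fun x => σ x i j) (hξ : Measurable[F 0] ξ)
    (hres : Measurable (driftResolvent b O h)) (hh : 0 ≤ h) {n : ℕ} (hn : n * h ≤ T) :
    Measurable[F (n * h)] (implicitEuler O b σ ξ W h n) := by
  induction n with
  | zero => exact hξ.mono (F.mono (by simp)) le_rfl
  | succ n ih =>
    have hle : n * h ≤ (n + 1 : ℕ) * h := by gcongr; simp
    have hprev : Measurable[F ((n + 1 : ℕ) * h)] (implicitEuler O b σ ξ W h n) :=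
      (ih (hle.trans hn)).mono (F.mono hle) le_rfl
    have hincr : Measurable[F ((n + 1 : ℕ) * h)] fun ω => W ((n + 1 : ℕ) * h) ω - W (n * h) ω :=
      hW.measurable_sub (by positivity) hle hn
    exact hres.comp ((measurable_add_matMulVec hσ).comp (hprev.prodMk hincr))

lemma lintegral_one_add_norm_sq_add_matMulVec_rpow_le {x v : EuclideanSpace ℝ (Fin d)}
    {A : Matrix (Fin d) (Fin m) ℝ} {ν : Measure (EuclideanSpace ℝ (Fin m))}
    [IsProbabilityMeasure ν] (hct : 0 ≤ ct) (hp : 2 ≤ p) (hh : 0 ≤ h) (hq : 0 ≤ q)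
    (hqp : q ≤ p / 2) (hcoerc : ⟪x, v⟫ + (p - 1) / 2 * ‖A‖ ^ 2 ≤ ct * (1 + ‖x‖ ^ 2))
    (hC : 1 + ‖x‖ ^ 2 ≤ C * (1 + ‖x - h • v‖ ^ 2))
    (hν : ∀ l : EuclideanSpace ℝ (Fin m),
      ν.map (fun w => ⟪l, w⟫) = gaussianReal 0 (h * ‖l‖ ^ 2).toNNReal) :
    ∫⁻ w, ENNReal.ofReal ((1 + ‖x + matMulVec A w‖ ^ 2) ^ q) ∂ν
      ≤ ENNReal.ofReal (Real.exp (2 * ct * C * h) ^ q) *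
        ENNReal.ofReal ((1 + ‖x - h • v‖ ^ 2) ^ q) := by
  have hbase : 0 ≤ 1 + ‖x‖ ^ 2 + (2 * (p / 2) - 1) * (h * ‖A‖ ^ 2) := by
    have : 0 ≤ 2 * (p / 2) - 1 := by linarith
    positivity
  have hgrowth : 1 + ‖x‖ ^ 2 + (2 * (p / 2) - 1) * (h * ‖A‖ ^ 2)
      ≤ Real.exp (2 * ct * C * h) * (1 + ‖x - h • v‖ ^ 2) :=
    calc 1 + ‖x‖ ^ 2 + (2 * (p / 2) - 1) * (h * ‖A‖ ^ 2)
        = 1 + (‖x‖ ^ 2 + 2 * h * ((p - 1) / 2 * ‖A‖ ^ 2)) := by ring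
      _ ≤ 1 + (‖x - h • v‖ ^ 2 + 2 * h * (ct * (1 + ‖x‖ ^ 2))) := by
          gcongr 1 + ?_
          exact norm_sq_add_le_norm_sub_smul_sq hh hcoerc
      _ ≤ 1 + (‖x - h • v‖ ^ 2 + 2 * h * (ct * (C * (1 + ‖x - h • v‖ ^ 2)))) := by gcongr
      _ = (2 * ct * C * h + 1) * (1 + ‖x - h • v‖ ^ 2) := by ring
      _ ≤ _ := by
          gcongr
          exact Real.add_one_le_exp _
  have hmeas : Measurable fun w => 1 + ‖x + matMulVec A w‖ ^ 2 := by
    have := measurable_add_matMulVec (σ := fun _ : EuclideanSpace ℝ (Fin d) => A)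
      (fun i j => measurable_const)
    exact ((this.comp (measurable_const.prodMk measurable_id)).norm.pow_const 2).const_add 1
  calc ∫⁻ w, ENNReal.ofReal ((1 + ‖x + matMulVec A w‖ ^ 2) ^ q) ∂ν
      ≤ ENNReal.ofReal ((1 + ‖x‖ ^ 2 + (2 * (p / 2) - 1) * (h * ‖A‖ ^ 2)) ^ q) :=
        lintegral_ofReal_rpow_le_of_exponent_le hmeas.aestronglyMeasurable
          (fun w => by positivity) hbase hq hqp
          (lintegral_add_norm_sq_matMulVec_rpow_le (by linarith) one_pos hh hν A x)
    _ ≤ ENNReal.ofReal ((Real.exp (2 * ct * C * h) * (1 + ‖x - h • v‖ ^ 2)) ^ q) := by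
        gcongr
    _ = _ := by
        rw [Real.mul_rpow (by positivity) (by positivity), ENNReal.ofReal_mul (by positivity)]

lemma HasBrownianIncrements.lintegral_implicitEuler_succ_le [IsProbabilityMeasure P]
    (hW : HasBrownianIncrements P F T W) (hct : 0 ≤ ct) (hp : 2 ≤ p) (hh : 0 ≤ h) (hq : 0 ≤ q)
    (hqp : q ≤ p / 2) (hσ : ∀ i j, Measurable fun x => σ x i j) (hξ : Measurable[F 0] ξ)
    (hξO : ∀ ω, ξ ω ∈ O)
    (hcoerc : ∀ x ∈ O, ⟪x, b x⟫ + (p - 1) / 2 * ‖σ x‖ ^ 2 ≤ ct * (1 + ‖x‖ ^ 2))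
    (hsurj : SurjOn (fun x => x - h • b x) O univ) (hres : Measurable (driftResolvent b O h))
    (hC : ∀ x ∈ O, 1 + ‖x‖ ^ 2 ≤ C * (1 + ‖x - h • b x‖ ^ 2)) {n : ℕ}
    (hn : (n + 1 : ℕ) * h ≤ T) :
    ∫⁻ ω, ENNReal.ofReal ((1 + ‖implicitEuler O b σ ξ W h (n + 1) ω
        - h • b (implicitEuler O b σ ξ W h (n + 1) ω)‖ ^ 2) ^ q) ∂P
      ≤ ENNReal.ofReal (Real.exp (2 * ct * C * h) ^ q) *
        ∫⁻ ω, ENNReal.ofReal ((1 + ‖implicitEuler O b σ ξ W h n ω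
          - h • b (implicitEuler O b σ ξ W h n ω)‖ ^ 2) ^ q) ∂P := by
  have hle : n * h ≤ (n + 1 : ℕ) * h := by gcongr; simp
  have hnh : 0 ≤ n * h := by positivity
  have hY := hW.measurable_implicitEuler hσ hξ hres hh (hle.trans hn)
  have hstep : (n + 1 : ℕ) * h - n * h = h := by push_cast; ring
  have : IsProbabilityMeasure (P.map fun ω => W ((n + 1 : ℕ) * h) ω - W (n * h) ω) :=
    Measure.isProbabilityMeasure_map
      ((hW.measurable_sub hnh hle hn).mono (F.le _) le_rfl).aemeasurable
  have hmeas : Measurable fun z : EuclideanSpace ℝ (Fin d) × EuclideanSpace ℝ (Fin m) =>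
      ENNReal.ofReal ((1 + ‖z.1 + matMulVec (σ z.1) z.2‖ ^ 2) ^ q) :=
    ((((measurable_add_matMulVec hσ).norm.pow_const 2).const_add 1).pow_const q).ennreal_ofReal
  simp only [implicitEuler_succ_sub_smul hsurj]
  rw [← lintegral_const_mul' _ _ ENNReal.ofReal_ne_top]
  refine (hW.lintegral_comp_sub hnh hle hn hY hmeas).trans_le (lintegral_mono fun ω => ?_)
  have hYO := implicitEuler_mem (σ := σ) (W := W) hξO hsurj n ω
  have hcond := lintegral_one_add_norm_sq_add_matMulVec_rpow_le hct hp hh hq hqp (hcoerc _ hYO)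
    (hC _ hYO) fun l => (hW.map_inner_map_sub hnh hle hn l).trans (by rw [hstep])
  simpa only using hcond

lemma HasBrownianIncrements.lintegral_implicitEuler_sub_smul_le [IsProbabilityMeasure P]
    (hW : HasBrownianIncrements P F T W) (hct : 0 ≤ ct) (hp : 2 ≤ p) (hh : 0 ≤ h) (hq : 0 ≤ q)
    (hqp : q ≤ p / 2) (hσ : ∀ i j, Measurable fun x => σ x i j) (hξ : Measurable[F 0] ξ)
    (hξO : ∀ ω, ξ ω ∈ O)
    (hcoerc : ∀ x ∈ O, ⟪x, b x⟫ + (p - 1) / 2 * ‖σ x‖ ^ 2 ≤ ct * (1 + ‖x‖ ^ 2))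
    (hsurj : SurjOn (fun x => x - h • b x) O univ) (hres : Measurable (driftResolvent b O h))
    (hC : ∀ x ∈ O, 1 + ‖x‖ ^ 2 ≤ C * (1 + ‖x - h • b x‖ ^ 2)) {n : ℕ} (hn : n * h ≤ T) :
    ∫⁻ ω, ENNReal.ofReal ((1 + ‖implicitEuler O b σ ξ W h n ω
        - h • b (implicitEuler O b σ ξ W h n ω)‖ ^ 2) ^ q) ∂P
      ≤ ENNReal.ofReal (Real.exp (2 * ct * C * (n * h)) ^ q) *
        ∫⁻ ω, ENNReal.ofReal ((1 + ‖ξ ω - h • b (ξ ω)‖ ^ 2) ^ q) ∂P := by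
  induction n with
  | zero => simp [implicitEuler]
  | succ n ih =>
    have hle : n * h ≤ (n + 1 : ℕ) * h := by gcongr; simp
    refine (hW.lintegral_implicitEuler_succ_le hct hp hh hq hqp hσ hξ hξO hcoerc hsurj hres hC
      hn).trans ((mul_le_mul_right (ih (hle.trans hn)) _).trans_eq ?_)
    rw [← mul_assoc, ← ENNReal.ofReal_mul (by positivity),
      ← Real.mul_rpow (Real.exp_nonneg _) (Real.exp_nonneg _), ← Real.exp_add]
    congr 5
    push_cast
    ring

lemma HasBrownianIncrements.lintegral_implicitEuler_le [IsProbabilityMeasure P]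
    (hW : HasBrownianIncrements P F T W) (hct : 0 ≤ ct) (hp : 2 ≤ p) (hh : 0 < h) (hq : 0 ≤ q)
    (hqp : q ≤ p / 2) (hσ : ∀ i j, Measurable fun x => σ x i j) (hξ : Measurable[F 0] ξ)
    (hξO : ∀ ω, ξ ω ∈ O)
    (hcoerc : ∀ x ∈ O, ⟪x, b x⟫ + (p - 1) / 2 * ‖σ x‖ ^ 2 ≤ ct * (1 + ‖x‖ ^ 2))
    (hsurj : SurjOn (fun x => x - h • b x) O univ) (hres : Measurable (driftResolvent b O h))
    (hC0 : 0 ≤ C) (hC : ∀ x ∈ O, 1 + ‖x‖ ^ 2 ≤ C * (1 + ‖x - h • b x‖ ^ 2)) {n : ℕ}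
    (hn : n ≤ T / h) :
    ∫⁻ ω, ENNReal.ofReal ((1 + ‖implicitEuler O b σ ξ W h n ω‖ ^ 2) ^ q) ∂P
      ≤ ENNReal.ofReal ((C * Real.exp (2 * ct * C * T)) ^ q) *
        ∫⁻ ω, ENNReal.ofReal ((1 + ‖ξ ω - h • b (ξ ω)‖ ^ 2) ^ q) ∂P := by
  have hnh : n * h ≤ T := (le_div_iff₀ hh).1 hn
  calc ∫⁻ ω, ENNReal.ofReal ((1 + ‖implicitEuler O b σ ξ W h n ω‖ ^ 2) ^ q) ∂P
      ≤ ENNReal.ofReal (C ^ q) * ∫⁻ ω, ENNReal.ofReal ((1 + ‖implicitEuler O b σ ξ W h n ω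
          - h • b (implicitEuler O b σ ξ W h n ω)‖ ^ 2) ^ q) ∂P :=
        lintegral_ofReal_rpow_le_mul hC0 hq (fun ω => by positivity)
          (fun ω => hC _ (implicitEuler_mem hξO hsurj n ω)) (fun ω => by positivity)
    _ ≤ ENNReal.ofReal (C ^ q) * (ENNReal.ofReal (Real.exp (2 * ct * C * T) ^ q) *
          ∫⁻ ω, ENNReal.ofReal ((1 + ‖ξ ω - h • b (ξ ω)‖ ^ 2) ^ q) ∂P) := by
        refine mul_le_mul_right ((hW.lintegral_implicitEuler_sub_smul_le hct hp hh.le hq hqp hσ hξ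
          hξO hcoerc hsurj hres hC hnh).trans ?_) _
        gcongr
    _ = _ := by
        rw [← mul_assoc, ← ENNReal.ofReal_mul (by positivity),
          ← Real.mul_rpow hC0 (Real.exp_nonneg _)]

lemma HasBrownianIncrements.limsup_iSup_lintegral_implicitEuler_le [IsProbabilityMeasure P]
    (hW : HasBrownianIncrements P F T W) (hct : 0 ≤ ct) (hp : 2 ≤ p) (hq : 0 ≤ q)
    (hqp : q ≤ p / 2) (hb : Measurable b) (hσ : ∀ i j, Measurable fun x => σ x i j)
    (hξ : Measurable[F 0] ξ) (hξO : ∀ ω, ξ ω ∈ O)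
    (hξp : ∫⁻ ω, ENNReal.ofReal (‖b (ξ ω)‖ ^ p) ∂P < ∞) (hbO : OneSidedLipschitzOn c b O)
    (hcoerc : ∀ x ∈ O, ⟪x, b x⟫ + (p - 1) / 2 * ‖σ x‖ ^ 2 ≤ ct * (1 + ‖x‖ ^ 2))
    (hsurj : ∀ s : ℝ, 0 < s → s * c < 1 → SurjOn (fun x => x - s • b x) O univ) :
    limsup (fun h : ℝ => ⨆ n : ℕ, ⨆ _ : (n : ℝ) ≤ T / h,
        ∫⁻ ω, ENNReal.ofReal ((1 + ‖implicitEuler O b σ ξ W h n ω‖ ^ 2) ^ q) ∂P)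
        (nhdsWithin 0 (Ioi 0))
      ≤ ENNReal.ofReal (Real.exp (2 * ct * T) ^ q) *
        ∫⁻ ω, ENNReal.ofReal ((1 + ‖ξ ω‖ ^ 2) ^ q) ∂P := by
  by_cases hξq : ∫⁻ ω, ENNReal.ofReal ((1 + ‖ξ ω‖ ^ 2) ^ q) ∂P = ∞
  · rw [hξq, ENNReal.mul_top (ENNReal.ofReal_pos.2 (by positivity)).ne']
    exact le_top
  have hξm : Measurable ξ := hξ.mono (F.le 0) le_rfl
  have hbξq : ∫⁻ ω, ENNReal.ofReal ((1 + ‖b (ξ ω)‖ ^ 2) ^ q) ∂P ≠ ∞ :=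
    (lintegral_one_add_sq_rpow_lt_top (fun ω => norm_nonneg _) hq (by linarith) hξp).ne
  have hinner (x) (hx : x ∈ O) : ⟪x, b x⟫ ≤ ct * (1 + ‖x‖ ^ 2) := by
    have : 0 ≤ (p - 1) / 2 * ‖σ x‖ ^ 2 := mul_nonneg (by linarith) (by positivity)
    linarith [hcoerc x hx]
  let C (h : ℝ) : ℝ := (1 - 2 * ct * h)⁻¹
  have hC_tendsto : Tendsto (fun h => C h * Real.exp (2 * ct * C h * T)) (nhds 0)
      (nhds (Real.exp (2 * ct * T))) := by
    have : ContinuousAt (fun h => C h * Real.exp (2 * ct * C h * T)) 0 := by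
      fun_prop (disch := simp)
    simpa [ContinuousAt, C] using this
  have hlim : Tendsto (fun h => ENNReal.ofReal ((C h * Real.exp (2 * ct * C h * T)) ^ q) *
        ∫⁻ ω, ENNReal.ofReal ((1 + ‖ξ ω - h • b (ξ ω)‖ ^ 2) ^ q) ∂P) (nhdsWithin 0 (Ioi 0))
      (nhds (ENNReal.ofReal (Real.exp (2 * ct * T) ^ q) *
        ∫⁻ ω, ENNReal.ofReal ((1 + ‖ξ ω‖ ^ 2) ^ q) ∂P)) :=
    (ENNReal.Tendsto.mul (ENNReal.tendsto_ofReal (hC_tendsto.rpow_const (Or.inr hq)))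
      (Or.inr hξq) (tendsto_lintegral_one_add_norm_sub_smul_sq_rpow hξm (hb.comp hξm) hq hξq hbξq)
      (Or.inr ENNReal.ofReal_ne_top)).mono_left nhdsWithin_le_nhds
  refine (limsup_le_limsup ?_).trans_eq hlim.limsup_eq
  have hsmall (k : ℝ) : ∀ᶠ h in nhdsWithin 0 (Ioi 0), k * h < 1 :=
    nhdsWithin_le_nhds ((continuous_const_mul k).tendsto' 0 0 (by simp)
      |>.eventually_lt_const one_pos)
  filter_upwards [self_mem_nhdsWithin, hsmall c, hsmall (2 * ct)] with h (hh : 0 < h) hch hcth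
  rw [mul_comm] at hch
  exact iSup₂_le fun n hn => hW.lintegral_implicitEuler_le hct hp hh hq hqp hσ hξ hξO hcoerc
    (hsurj h hh hch) (hbO.continuous_driftResolvent hh.le hch (hsurj h hh hch)).measurable
    (inv_nonneg.2 (sub_nonneg.2 hcth.le))
    (fun x hx => one_add_norm_sq_le_inv_mul hh.le hcth (hinner x hx)) hn

lemma HasBrownianIncrements.iSup_lintegral_implicitEuler_le [IsProbabilityMeasure P]
    (hW : HasBrownianIncrements P F T W) (hct : 0 ≤ ct) (hp : 2 ≤ p) (hq : 0 ≤ q)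
    (hqp : q ≤ p / 2) (hσ : ∀ i j, Measurable fun x => σ x i j)
    (hξ : Measurable[F 0] ξ) (hξO : ∀ ω, ξ ω ∈ O) (hbO : OneSidedLipschitzOn c b O)
    (hcoerc : ∀ x ∈ O, ⟪x, b x⟫ + (p - 1) / 2 * ‖σ x‖ ^ 2 ≤ ct * (1 + ‖x‖ ^ 2))
    (hsurj : ∀ s : ℝ, 0 < s → s * c < 1 → SurjOn (fun x => x - s • b x) O univ)
    {y : EuclideanSpace ℝ (Fin d)} (hy : y ∈ O) :
    (⨆ h : ℝ, ⨆ _ : h ∈ Ioc (0 : ℝ) T, ⨆ _ : h * (4 * c) ≤ 1, ⨆ n : ℕ, ⨆ _ : (n : ℝ) ≤ T / h,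
        ∫⁻ ω, ENNReal.ofReal ((1 + ‖implicitEuler O b σ ξ W h n ω‖ ^ 2) ^ q) ∂P)
      ≤ ENNReal.ofReal (((8 + 18 * (‖y‖ + T * ‖b y‖) ^ 2) *
          Real.exp (2 * ct * (8 + 18 * (‖y‖ + T * ‖b y‖) ^ 2) * T)) ^ q) *
        ∫⁻ ω, ENNReal.ofReal ((1 + (‖ξ ω‖ + T * ‖b (ξ ω)‖) ^ 2) ^ q) ∂P := by
  refine iSup₂_le fun h ⟨hh, hhT⟩ => iSup_le fun hhc => iSup₂_le fun n hn => ?_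
  have hhc' : h * c < 1 := by linarith
  refine (hW.lintegral_implicitEuler_le hct hp hh hq hqp hσ hξ hξO hcoerc (hsurj h hh hhc')
    (hbO.continuous_driftResolvent hh.le hhc' (hsurj h hh hhc')).measurable (by positivity)
    (fun x hx => hbO.one_add_norm_sq_le hh.le hhT hhc hx hy) hn).trans ?_
  gcongr with ω
  refine (norm_sub_le _ _).trans ?_
  rw [norm_smul, Real.norm_of_nonneg hh.le]
  gcongr

end ImplicitEuler

lemma exists_pos_forall_rpow_le_exp_mul (a r T : ℝ) {B : ℝ} (hB : 1 ≤ B) :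
    ∃ ρ : ℝ, 0 < ρ ∧ a ≤ ρ ∧ (0 < T → ∀ q ≤ r, B ^ q ≤ Real.exp (ρ * T)) := by
  refine ⟨max (max a (Real.log B * r / T)) 1, by positivity, by simp, fun hT q hq => ?_⟩
  calc B ^ q ≤ B ^ r := Real.rpow_le_rpow_of_exponent_le hB hq
    _ = Real.exp (Real.log B * r / T * T) := by
        rw [div_mul_cancel₀ _ hT.ne', Real.rpow_def_of_pos (by positivity)]
    _ ≤ _ := by
        gcongr
        simp

theorem implicit_Euler_existence_uniqueness_and_moment_bounds_general
    {d m : ℕ} {c ct T p : ℝ} (hc : 0 ≤ c) (hct : 0 ≤ ct) (hT : 0 ≤ T) (hp : 2 ≤ p)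
    {O : Set (EuclideanSpace ℝ (Fin d))}
    {b : EuclideanSpace ℝ (Fin d) → EuclideanSpace ℝ (Fin d)} (hb : Measurable b)
    {σ : EuclideanSpace ℝ (Fin d) → Matrix (Fin d) (Fin m) ℝ}
    (hσ : ∀ i j, Measurable fun x => σ x i j) (hbO : OneSidedLipschitzOn c b O)
    (hcoerc : ∀ x ∈ O, ⟪x, b x⟫ + (p - 1) / 2 * ‖σ x‖ ^ 2 ≤ ct * (1 + ‖x‖ ^ 2))
    (hsurj : ∀ s : ℝ, 0 < s → s * c < 1 → SurjOn (fun x => x - s • b x) O univ) :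
    ∃ ρ : ℝ, 0 < ρ ∧ ∀ {Ω : Type*} [mΩ : MeasurableSpace Ω] (P : Measure Ω)
      [IsProbabilityMeasure P] (F : Filtration ℝ mΩ) (W : ℝ → Ω → EuclideanSpace ℝ (Fin m))
      (ξ : Ω → EuclideanSpace ℝ (Fin d)), HasBrownianIncrements P F T W → Measurable[F 0] ξ →
      (∀ ω, ξ ω ∈ O) → ∫⁻ ω, ENNReal.ofReal (‖b (ξ ω)‖ ^ p) ∂P < ∞ →
      ∃ Y : ℝ → ℕ → Ω → EuclideanSpace ℝ (Fin d),
        ImplicitEulerScheme d m T c O b σ ξ W Y ∧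
        (∀ Y', ImplicitEulerScheme d m T c O b σ ξ W Y' →
          ∀ h : ℝ, h ∈ Ioc 0 T → h * c < 1 → ∀ n : ℕ, n ≤ T / h → ∀ ω, Y' h n ω = Y h n ω) ∧
        ∀ q : ℝ, 0 ≤ q → q ≤ p / 2 →
          limsup (fun h : ℝ => ⨆ n : ℕ, ⨆ _ : (n : ℝ) ≤ T / h,
              ∫⁻ ω, ENNReal.ofReal ((1 + ‖Y h n ω‖ ^ 2) ^ q) ∂P) (nhdsWithin 0 (Ioi 0))
            ≤ ENNReal.ofReal (Real.exp (ρ * T)) * ∫⁻ ω, ENNReal.ofReal ((1 + ‖ξ ω‖ ^ 2) ^ q) ∂P ∧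
          (⨆ h : ℝ, ⨆ _ : h ∈ Ioc 0 T, ⨆ _ : h * (4 * c) ≤ 1, ⨆ n : ℕ, ⨆ _ : (n : ℝ) ≤ T / h,
              ∫⁻ ω, ENNReal.ofReal ((1 + ‖Y h n ω‖ ^ 2) ^ q) ∂P)
            ≤ ENNReal.ofReal (Real.exp ((4 * c + ρ) * T)) *
              ∫⁻ ω, ENNReal.ofReal ((1 + (‖ξ ω‖ + T * ‖b (ξ ω)‖) ^ 2) ^ q) ∂P := by
  obtain ⟨y, hy, -⟩ := hsurj (c + 1)⁻¹ (by positivity) (by field_simp; linarith) (mem_univ 0)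
  set C : ℝ := 8 + 18 * (‖y‖ + T * ‖b y‖) ^ 2
  have hC : 1 ≤ C := by linarith [sq_nonneg (‖y‖ + T * ‖b y‖)]
  obtain ⟨ρ, hρ, hρct, hρB⟩ := exists_pos_forall_rpow_le_exp_mul (p * ct) (p / 2) T
    (one_le_mul_of_one_le_of_one_le hC (Real.one_le_exp (x := 2 * ct * C * T) (by positivity)))
  refine ⟨ρ, hρ, fun P _ F W ξ hW hξ hξO hξp => ⟨implicitEuler O b σ ξ W,
    implicitEulerScheme_implicitEuler hsurj, fun Y' hY' h hh hhc n hn =>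
    (implicitEulerScheme_implicitEuler hsurj).eq_of_oneSidedLipschitzOn hbO hY' hh hhc hn,
    fun q hq hqp => ⟨?_, ?_⟩⟩⟩
  · refine (hW.limsup_iSup_lintegral_implicitEuler_le hct hp hq hqp hb hσ hξ hξO hξp hbO hcoerc
      hsurj).trans ?_
    rw [← Real.exp_mul]
    gcongr ENNReal.ofReal (Real.exp ?_) * _
    nlinarith [mul_le_mul_of_nonneg_right hqp (mul_nonneg hct hT)]
  · rcases hT.eq_or_lt with rfl | hT
    · simp
    refine (hW.iSup_lintegral_implicitEuler_le hct hp hq hqp hσ hξ hξO hbO hcoerc hsurj hy).trans ?_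
    gcongr
    refine (hρB hT q hqp).trans ?_
    gcongr
    linarith

theorem implicit_Euler_existence_uniqueness_and_moment_bounds
    {Ω : Type*} [MeasurableSpace Ω] (P : Measure Ω) [IsProbabilityMeasure P]
    (d m : ℕ) (hd : 0 < d) (hm : 0 < m)
    (cdrift ct T p : ℝ) (hcdrift : 0 ≤ cdrift) (hct : 0 ≤ ct) (hT : 0 ≤ T) (hp : 2 ≤ p)
    (O : Set (EuclideanSpace ℝ (Fin d))) (hO : MeasurableSet O)
    (b : EuclideanSpace ℝ (Fin d) → EuclideanSpace ℝ (Fin d)) (hbmeas : Measurable b)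
    (σ : EuclideanSpace ℝ (Fin d) → Matrix (Fin d) (Fin m) ℝ)
    (hσmeas : ∀ i j, Measurable (fun x => σ x i j))
    (F : ℝ → MeasurableSpace Ω)
    (hF_mono : ∀ s u : ℝ, s ≤ u → F s ≤ F u)
    (hF_le : ∀ u : ℝ, F u ≤ (inferInstance : MeasurableSpace Ω))
    (W : ℝ → Ω → EuclideanSpace ℝ (Fin m))
    (hW0 : ∀ ω, W 0 ω = 0)
    (hWadapt : ∀ u ∈ Set.Icc (0:ℝ) T, @Measurable Ω _ (F u) _ (W u))
    (hWcont : ∀ ω, ContinuousOn (fun u => W u ω) (Set.Icc 0 T))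
    (hWlaw : ∀ s u : ℝ, 0 ≤ s → s ≤ u → u ≤ T → ∀ l : EuclideanSpace ℝ (Fin m),
      Measure.map (fun ω => ⟪l, W u ω - W s ω⟫) P
        = gaussianReal 0 (Real.toNNReal ((u - s) * ‖l‖ ^ 2)))
    (hWindep : ∀ s u : ℝ, 0 ≤ s → s ≤ u → u ≤ T →
      Indep (MeasurableSpace.comap (fun ω => W u ω - W s ω) inferInstance) (F s) P)
    (ξ : Ω → EuclideanSpace ℝ (Fin d))
    (hξmeas : @Measurable Ω _ (F 0) _ ξ) (hξO : ∀ ω, ξ ω ∈ O)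
    (hξmom : ∫⁻ ω, ENNReal.ofReal (‖b (ξ ω)‖ ^ p) ∂P < ⊤)
    (hmono : ∀ x ∈ O, ∀ y ∈ O, ⟪x - y, b x - b y⟫ ≤ cdrift * ‖x - y‖ ^ 2)
    (hcoerc : ∀ x ∈ O, ⟪x, b x⟫ + (p - 1) / 2 * ‖σ x‖ ^ 2 ≤ ct * (1 + ‖x‖ ^ 2))
    (hsurj : ∀ s : ℝ, 0 < s → s * cdrift < 1 →
      Set.SurjOn (fun x => x - s • b x) O Set.univ) :
    ∃ Y : ℝ → ℕ → Ω → EuclideanSpace ℝ (Fin d),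
      ImplicitEulerScheme d m T cdrift O b σ ξ W Y ∧
      (∀ Y' : ℝ → ℕ → Ω → EuclideanSpace ℝ (Fin d),
        ImplicitEulerScheme d m T cdrift O b σ ξ W Y' →
        ∀ h : ℝ, h ∈ Set.Ioc (0:ℝ) T → h * cdrift < 1 →
          ∀ n : ℕ, (n : ℝ) ≤ T / h → ∀ ω, Y' h n ω = Y h n ω) ∧
      ∃ ρ : ℝ, 0 < ρ ∧ ∀ q : ℝ, 0 ≤ q → q ≤ p / 2 →
        Filter.limsup
            (fun h : ℝ => ⨆ n : ℕ, ⨆ _ : (n : ℝ) ≤ T / h,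
              ∫⁻ ω, ENNReal.ofReal ((1 + ‖Y h n ω‖ ^ 2) ^ q) ∂P)
            (nhdsWithin 0 (Set.Ioi 0))
          ≤ ENNReal.ofReal (Real.exp (ρ * T)) *
              ∫⁻ ω, ENNReal.ofReal ((1 + ‖ξ ω‖ ^ 2) ^ q) ∂P
        ∧ (⨆ h : ℝ, ⨆ _ : h ∈ Set.Ioc (0:ℝ) T, ⨆ _ : h * (4 * cdrift) ≤ 1,
              ⨆ n : ℕ, ⨆ _ : (n : ℝ) ≤ T / h,
                ∫⁻ ω, ENNReal.ofReal ((1 + ‖Y h n ω‖ ^ 2) ^ q) ∂P)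
            ≤ ENNReal.ofReal (Real.exp ((4 * cdrift + ρ) * T)) *
                ∫⁻ ω, ENNReal.ofReal ((1 + (‖ξ ω‖ + T * ‖b (ξ ω)‖) ^ 2) ^ q) ∂P := by
  obtain ⟨ρ, hρ, H⟩ := implicit_Euler_existence_uniqueness_and_moment_bounds_general
    hcdrift hct hT hp hbmeas hσmeas hmono hcoerc hsurj
  obtain ⟨Y, hY, hY_unique, hY_moments⟩ :=
    H P ⟨F, hF_mono, hF_le⟩ W ξ ⟨hWadapt, hWlaw, hWindep⟩ hξmeas hξO hξmom
  exact ⟨Y, hY, hY_unique, ρ, hρ, hY_moments⟩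

end
end
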